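/- There exists an absolute constant C⋆ > 0 such that for every odd prime p, every multiplicative subgroup Γ of F_p^* (viewed as a subset of F_p), and every integer k ≥ 1, one has 0 ≤ T⁺_{2^k}(Γ) − |Γ|^{2^{k+1}}/p and T⁺_{2^k}(Γ) − |Γ|^{2^{k+1}}/p ≤ 2^{3k²}·(C⋆·(log p)⁴)^{k−1} · |Γ|^{2^{k+1} − (k+7)/2} · T⁺₂(Γ). -/

import Mathlib

open Finset

/-- `Tplus p k A` is the number of `2k`-tuples `(a₁,…,a_k,a₁',…,a_k') ∈ A^{2k}`
with `a₁+⋯+a_k = a₁'+⋯+a_k'`. -/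
def Tplus (p k : ℕ) (A : Finset (ZMod p)) : ℕ :=
  (((Fintype.piFinset fun _ : Fin k => A) ×ˢ (Fintype.piFinset fun _ : Fin k => A)).filter
    fun a => ∑ i, a.1 i = ∑ i, a.2 i).card

open Finset

lemma chain_rule {K B σ : Type*} [Field K] [CommRing B] [Algebra K B] [Fintype σ]
    (D : Derivation K B B) (x : σ → B) (f : MvPolynomial σ K) :
    D (MvPolynomial.aeval x f) =
      ∑ i, MvPolynomial.aeval x (MvPolynomial.pderiv i f) * D (x i) := by
  classical
  induction f using MvPolynomial.induction_on with
  | C a => simp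
  | add f g hf hg => simp [hf, hg, Finset.sum_add_distrib, add_mul]
  | mul_X f j hf =>
    simp only [map_mul, MvPolynomial.aeval_X, Derivation.leibniz, hf, MvPolynomial.pderiv_X,
      smul_eq_mul, map_add, add_mul, Finset.sum_add_distrib]
    congr 1
    · rw [Finset.sum_eq_single j]
      · simp
      · intro b _ hb; simp [hb]
      · simp
    · rw [Finset.mul_sum]; exact Finset.sum_congr rfl fun i _ => by ring

lemma vanish_line {K σ : Type*} [Field K] (f : MvPolynomial σ K) (v : σ → Polynomial K)
    (hv : ∀ i, (v i).natDegree ≤ 1) (S : Finset K) (hS : f.totalDegree < S.card)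
    (h : ∀ t ∈ S, MvPolynomial.eval (fun i => (v i).eval t) f = 0) (t : K) :
    MvPolynomial.eval (fun i => (v i).eval t) f = 0 := by
  have key : ∀ t, MvPolynomial.eval (fun i => (v i).eval t) f
      = (MvPolynomial.aeval v f).eval t := by
    intro t
    rw [← Polynomial.coe_evalRingHom, MvPolynomial.aeval_def, MvPolynomial.hom_eval₂]
    simp only [MvPolynomial.eval, MvPolynomial.eval₂Hom]
    rw [show ((Polynomial.evalRingHom t).comp (algebraMap K (Polynomial K))) = RingHom.id K by
      ext; simp]
    rfl
  classical
  have hd := MvPolynomial.aeval_natDegree_le f le_rfl v hv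
  have : MvPolynomial.aeval v f = 0 := by
    by_contra hne
    have : S.card ≤ (MvPolynomial.aeval v f).natDegree := by
      refine le_trans ?_ (Polynomial.card_roots' _)
      refine le_trans (Finset.card_le_card ?_) (Multiset.toFinset_card_le _)
      intro t ht
      rw [Multiset.mem_toFinset, Polynomial.mem_roots hne, Polynomial.IsRoot, ← key]
      exact h t ht
    omega
  rw [key, this]; simp

noncomputable section
namespace Rud
variable {K : Type*} [Field K]

/-- points of the `l`-line; coordinates `(Z,X,Y)` -/
def pl (q : K × K × K) (t : K) : Fin 3 → K := ![q.2.2 - q.2.1 * t, q.1, t]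
/-- points of the `m`-line `(y,γ,w)` -/
def pm (q : K × K × K) (t : K) : Fin 3 → K := ![q.2.1 * t - q.2.2, t, q.1]

def VL (f : MvPolynomial (Fin 3) K) (q : K × K × K) : Prop := ∀ t, MvPolynomial.eval (pl q t) f = 0
def VM (f : MvPolynomial (Fin 3) K) (q : K × K × K) : Prop := ∀ t, MvPolynomial.eval (pm q t) f = 0
def Inc (i j : K × K × K) : Prop := i.2.2 - i.2.1 * j.1 = j.2.1 * i.1 - j.2.2

lemma inc_pt {i j : K × K × K} (h : Inc i j) : pl i j.1 = pm j i.1 := by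
  unfold Inc at h; simp [pl, pm, h]

def vl (q : K × K × K) : Fin 3 → Polynomial K :=
  ![Polynomial.C q.2.2 - Polynomial.C q.2.1 * Polynomial.X, Polynomial.C q.1, Polynomial.X]
def vm (q : K × K × K) : Fin 3 → Polynomial K :=
  ![Polynomial.C q.2.1 * Polynomial.X - Polynomial.C q.2.2, Polynomial.X, Polynomial.C q.1]

lemma vl_eval (q : K × K × K) (t : K) : (fun i => (vl q i).eval t) = pl q t := by
  funext i; fin_cases i <;> simp [vl, pl]
lemma vm_eval (q : K × K × K) (t : K) : (fun i => (vm q i).eval t) = pm q t := by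
  funext i; fin_cases i <;> simp [vm, pm]
lemma vl_deg (q : K × K × K) (i) : (vl q i).natDegree ≤ 1 := by
  fin_cases i <;> simp only [vl] <;> simp
  compute_degree
lemma vm_deg (q : K × K × K) (i) : (vm q i).natDegree ≤ 1 := by
  fin_cases i <;> simp only [vm] <;> simp
  compute_degree

lemma VL_of (f : MvPolynomial (Fin 3) K) (q) (S : Finset K) (hS : f.totalDegree < S.card)
    (h : ∀ t ∈ S, MvPolynomial.eval (pl q t) f = 0) : VL f q := by
  intro t
  have := vanish_line f (vl q) (vl_deg q) S hS (by intro t ht; rw [vl_eval]; exact h t ht) t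
  rwa [vl_eval] at this
lemma VM_of (f : MvPolynomial (Fin 3) K) (q) (S : Finset K) (hS : f.totalDegree < S.card)
    (h : ∀ t ∈ S, MvPolynomial.eval (pm q t) f = 0) : VM f q := by
  intro t
  have := vanish_line f (vm q) (vm_deg q) S hS (by intro t ht; rw [vm_eval]; exact h t ht) t
  rwa [vm_eval] at this

lemma eval_aeval_poly {σ : Type*} (v : σ → Polynomial K) (f : MvPolynomial σ K) (t : K) :
    (MvPolynomial.aeval v f).eval t = MvPolynomial.eval (fun i => (v i).eval t) f := by
  rw [← Polynomial.coe_evalRingHom, MvPolynomial.aeval_def, MvPolynomial.hom_eval₂]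
  simp only [MvPolynomial.eval, MvPolynomial.eval₂Hom]
  rw [show ((Polynomial.evalRingHom t).comp (algebraMap K (Polynomial K))) = RingHom.id K by
    ext; simp]
  rfl

open MvPolynomial in
lemma derivL [Infinite K] {f : MvPolynomial (Fin 3) K} {q} (h : VL f q) :
    VL (pderiv 2 f - C q.2.1 * pderiv 0 f) q := by
  have h0 : aeval (vl q) f = 0 := by
    apply Polynomial.funext; intro t
    rw [eval_aeval_poly, vl_eval, h t]; simp
  have h1 := chain_rule (Polynomial.derivative' (R := K)) (vl q) f
  rw [h0] at h1
  intro t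
  have h2 := congrArg (Polynomial.eval t) h1
  simp only [Fin.sum_univ_three, Polynomial.eval_add, Polynomial.eval_mul, eval_aeval_poly,
    vl_eval] at h2
  simp [vl] at h2
  simp only [map_sub, map_mul, eval_C]
  linear_combination -h2

open MvPolynomial in
def DD (g : MvPolynomial (Fin 3) K) : Derivation K (MvPolynomial (Fin 3) K) (MvPolynomial (Fin 3) K) :=
  pderiv 0 g • pderiv 2 - pderiv 2 g • pderiv 0

open MvPolynomial in
lemma DD_apply (g f : MvPolynomial (Fin 3) K) :
  DD g f = pderiv 0 g * pderiv 2 f - pderiv 2 g * pderiv 0 f := by simp [DD]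

open MvPolynomial in
def HH (g : MvPolynomial (Fin 3) K) : MvPolynomial (Fin 3) K :=
  pderiv 0 g * DD g (pderiv 2 g) - pderiv 2 g * DD g (pderiv 0 g)

open MvPolynomial in
lemma HH_vanish [Infinite K] {g : MvPolynomial (Fin 3) K} {q} (h : VL g q) : VL (HH g) q := by
  have h1 := derivL h
  have h2 := derivL h1
  intro t
  have e1 := h1 t
  have e2 := h2 t
  simp only [map_sub, map_mul, eval_C, pderiv_mul, pderiv_C, zero_mul, zero_add] at e1 e2
  simp only [HH, DD_apply, map_sub, map_mul]
  generalize eval (pl q t) ((pderiv 2) g) = V at *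
  generalize eval (pl q t) ((pderiv 0) g) = U at *
  obtain rfl : V = q.2.1 * U := by linear_combination e1
  linear_combination U ^ 2 * e2

open MvPolynomial in
lemma totalDegree_pderiv_le {σ : Type*} (i : σ) (f : MvPolynomial σ K) :
    (pderiv i f).totalDegree ≤ f.totalDegree - 1 := by
  rw [totalDegree]
  apply Finset.sup_le
  intro m hm
  rw [mem_support_iff, coeff_pderiv] at hm
  have h1 : m + Finsupp.single i 1 ∈ f.support := by
    rw [mem_support_iff]; intro h; simp [h] at hm
  have h2 := le_totalDegree h1
  rw [Finsupp.sum_add_index' (by simp) (by simp)] at h2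
  simp at h2
  omega

open MvPolynomial in
lemma HH_deg (g : MvPolynomial (Fin 3) K) : (HH g).totalDegree ≤ 3 * g.totalDegree := by
  have h0 := totalDegree_pderiv_le 0 g
  have h2 := totalDegree_pderiv_le 2 g
  have hd : ∀ f : MvPolynomial (Fin 3) K, f.totalDegree ≤ g.totalDegree →
      (DD g f).totalDegree ≤ 2 * g.totalDegree := by
    intro f hf
    rw [DD_apply]
    have a1 := totalDegree_pderiv_le 0 f
    have a2 := totalDegree_pderiv_le 2 f
    refine (totalDegree_sub _ _).trans (max_le ?_ ?_) <;>
    · refine (totalDegree_mul _ _).trans ?_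
      omega
  have e1 := hd _ (h0.trans (Nat.sub_le _ _))
  have e2 := hd _ (h2.trans (Nat.sub_le _ _))
  unfold HH
  refine (totalDegree_sub _ _).trans (max_le ?_ ?_) <;>
    · refine (totalDegree_mul _ _).trans ?_
      omega

open MvPolynomial in
lemma indepZ {p : ℕ} [CharP K p] (g : MvPolynomial (Fin 3) K) (hp : g.totalDegree < p)
    (h : pderiv 0 g = 0) (s s' t y : K) : eval ![s, t, y] g = eval ![s', t, y] g := by
  set v : Fin 3 → Polynomial K := ![Polynomial.X, Polynomial.C t, Polynomial.C y] with hv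
  have e : ∀ s, eval ![s, t, y] g = (aeval v g).eval s := by
    intro s; rw [eval_aeval_poly]; congr 2; funext i; fin_cases i <;> simp [hv]
  have hd : (aeval v g).natDegree ≤ g.totalDegree * 1 :=
    aeval_natDegree_le g le_rfl v (by intro i; fin_cases i <;> simp [hv])
  have h1 := chain_rule (Polynomial.derivative' (R := K)) v g
  simp [Fin.sum_univ_three, h, hv] at h1
  rw [← hv] at h1
  have h2 : (aeval v g) = Polynomial.C ((aeval v g).coeff 0) := by
    ext n
    cases n with
    | zero => simp
    | succ n =>
      rw [Polynomial.coeff_C_succ]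
      by_cases hn : p ≤ n + 1
      · exact Polynomial.coeff_eq_zero_of_natDegree_lt (by omega)
      · have h3 := congrArg (fun q => Polynomial.coeff q n) h1
        simp only [Polynomial.coeff_derivative, Polynomial.coeff_zero] at h3
        rcases mul_eq_zero.1 h3 with h4 | h4
        · exact h4
        · exfalso
          have : ((n + 1 : ℕ) : K) = 0 := by exact_mod_cast h4
          rw [CharP.cast_eq_zero_iff K p] at this
          exact hn (Nat.le_of_dvd (by omega) this)
  rw [e, e, h2]; simp

/-- coefficientwise derivation -/
def mapD {R : Type*} [CommRing R] [Algebra K R] (D : Derivation K R R) :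
    Derivation K (Polynomial R) (Polynomial R) :=
  (PolynomialModule.equivPolynomialSelf (R := R)).toLinearMap.compDer D.mapCoeffs

lemma mapD_coeff {R : Type*} [CommRing R] [Algebra K R] (D : Derivation K R R)
    (f : Polynomial R) (n : ℕ) : (mapD D f).coeff n = D (f.coeff n) := by
  rfl

open MvPolynomial in
lemma ruled {p : ℕ} [CharP K p] (g : MvPolynomial (Fin 3) K) (hp : g.totalDegree < p)
    (hg : Prime g) (hH : g ∣ HH g) (hZ : ¬ g ∣ pderiv 0 g) (P : Fin 3 → K) (hP : eval P g = 0)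
    (t : K) :
    eval ![P 0 - t * eval P (pderiv 2 g), P 1, P 2 + t * eval P (pderiv 0 g)] g = 0 := by
  set U := pderiv 0 g with hU
  set V := pderiv 2 g with hV
  set v : Fin 3 → Polynomial (MvPolynomial (Fin 3) K) :=
    ![Polynomial.C (X 0) - Polynomial.C V * Polynomial.X, Polynomial.C (X 1),
      Polynomial.C (X 2) + Polynomial.C U * Polynomial.X] with hv
  set Φ := aeval v g with hΦ
  have hvd : ∀ i, (v i).natDegree ≤ 1 := by
    intro i; fin_cases i <;> simp only [hv] <;> simp <;> compute_degree
  have hdeg : Φ.natDegree ≤ g.totalDegree := by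
    have := aeval_natDegree_le (MvPolynomial.map (algebraMap K (MvPolynomial (Fin 3) K)) g)
      (m := g.totalDegree) (by
        rw [totalDegree]
        apply Finset.sup_le
        intro m hm
        exact le_totalDegree (support_map_subset _ _ hm)) v hvd
    rw [aeval_map_algebraMap, mul_one] at this
    exact this
  have id1 := chain_rule ((Polynomial.derivative' (R := MvPolynomial (Fin 3) K)).restrictScalars K) v g
  have id2 := chain_rule (mapD (DD g)) v g
  have DC : ∀ a, mapD (DD g) (Polynomial.C a) = Polynomial.C (DD g a) := by
    intro a; ext n; rw [mapD_coeff, Polynomial.coeff_C, Polynomial.coeff_C]; split <;> simp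
  have DX : mapD (DD g) Polynomial.X = 0 := by
    ext n; rw [mapD_coeff, Polynomial.coeff_X]; split <;> simp
  have DX0 : DD g (X 0) = - V := by rw [DD_apply]; simp [hV]
  have DX1 : DD g (X 1) = 0 := by rw [DD_apply]; simp
  have DX2 : DD g (X 2) = U := by rw [DD_apply]; simp [hU]
  rw [← hΦ] at id1 id2
  simp [Fin.sum_univ_three, hv] at id1
  simp [Fin.sum_univ_three, hv, DC, DX, DX0, DX1, DX2] at id2
  rw [← hv] at id1 id2
  rw [← hU, ← hV] at id1 id2
  have key : (Polynomial.C U + Polynomial.X * Polynomial.C (DD g U)) * Polynomial.derivative Φ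
      = Polynomial.C U * mapD (DD g) Φ + Polynomial.X * (Polynomial.C (HH g) * aeval v U) := by
    have : HH g = U * DD g V - V * DD g U := rfl
    rw [id1, id2, this, Polynomial.C_sub, Polynomial.C_mul, Polynomial.C_mul]
    ring
  have hdiv : ∀ n, n < p → g ∣ Φ.coeff n := by
    intro n
    induction n with
    | zero =>
      intro _
      have : Φ.coeff 0 = g := by
        rw [Polynomial.coeff_zero_eq_eval_zero, hΦ, ← Polynomial.coe_evalRingHom, aeval_def,
          hom_eval₂]
        have e1 : (Polynomial.evalRingHom (0 : MvPolynomial (Fin 3) K)).comp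
          (algebraMap K (Polynomial (MvPolynomial (Fin 3) K))) = C := by
          ext a; simp [Polynomial.algebraMap_apply, algebraMap_eq]
        have e2 : (fun i => (Polynomial.evalRingHom (0 : MvPolynomial (Fin 3) K)) (v i)) = X := by
          funext i; fin_cases i <;> simp [hv]
        rw [e1, e2]
        exact eval₂_eta g
      rw [this]
    | succ n ih =>
      intro hn
      have h1 := ih (by omega)
      have h2 := congrArg (fun q => Polynomial.coeff q n) key
      simp only [add_mul, Polynomial.coeff_add, Polynomial.coeff_C_mul, mul_assoc,
        mapD_coeff, Polynomial.coeff_derivative] at h2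
      have hD : g ∣ DD g (Φ.coeff n) := by
        obtain ⟨c, hc⟩ := h1
        rw [hc, Derivation.leibniz]
        have : DD g g = 0 := by rw [DD_apply]; ring
        rw [this]; simp
      have h3 : g ∣ (Polynomial.X * (Polynomial.C (HH g) * aeval v U)).coeff n := by
        cases n with
        | zero => simp
        | succ n => 
          rw [Polynomial.coeff_X_mul, Polynomial.coeff_C_mul]
          exact hH.mul_right _
      have h4 : g ∣ (Polynomial.X * (Polynomial.C (DD g U) * Polynomial.derivative Φ)).coeff n := by
        cases n with
        | zero => simp
        | succ n => 
          rw [Polynomial.coeff_X_mul, Polynomial.coeff_C_mul, Polynomial.coeff_derivative]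
          exact (h1.mul_right _).mul_left _
      have h5 : g ∣ U * (Φ.coeff (n + 1) * ((n : MvPolynomial (Fin 3) K) + 1)) := by
        rw [eq_sub_of_add_eq h2]
        exact dvd_sub (dvd_add (hD.mul_left _) h3) h4
      have h6 := (hg.dvd_or_dvd h5).resolve_left hZ
      refine (hg.dvd_or_dvd h6).resolve_right ?_
      intro h7
      have : ((n : MvPolynomial (Fin 3) K) + 1) = C ((n + 1 : ℕ) : K) := by simp
      rw [this] at h7
      refine hg.not_isUnit (isUnit_of_dvd_unit h7 ?_)
      refine IsUnit.map C (isUnit_iff_ne_zero.2 ?_)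
      intro h8
      rw [CharP.cast_eq_zero_iff K p] at h8
      exact absurd (Nat.le_of_dvd (by omega) h8) (by omega)
  have hz : Φ.map (eval P) = 0 := by
    ext n
    rw [Polynomial.coeff_map, Polynomial.coeff_zero]
    by_cases hn : n < p
    · obtain ⟨c, hc⟩ := hdiv n hn
      rw [hc, map_mul, hP, zero_mul]
    · rw [Polynomial.coeff_eq_zero_of_natDegree_lt (by omega), map_zero]
  have hz2 := congrArg (Polynomial.eval t) hz
  rw [Polynomial.eval_map, Polynomial.eval_zero, ← Polynomial.coe_eval₂RingHom, hΦ, aeval_def,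
    hom_eval₂] at hz2
  rw [← hz2, eval, eval₂Hom, ]
  simp only [RingHom.coe_mk, MonoidHom.coe_mk, OneHom.coe_mk]
  congr 1
  · ext a; simp [Polynomial.algebraMap_apply, algebraMap_eq]
  · funext i; fin_cases i <;> simp [hv, mul_comm t]
end Rud
end

open Finset
noncomputable section
namespace Rud
variable {K : Type*} [Field K]
open MvPolynomial

lemma coeff_deg (f : MvPolynomial (Fin 3) K) (i : ℕ) :
    ((finSuccEquiv K 2 f).coeff i).totalDegree ≤ f.totalDegree := by
  by_cases h : (finSuccEquiv K 2 f).coeff i = 0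
  · simp [h]
  · have := totalDegree_coeff_finSuccEquiv_add_le f i h
    omega

lemma det_deg {m n : ℕ} (M : Matrix (Fin (m + n)) (Fin (m + n)) (MvPolynomial (Fin 2) K)) (a b : ℕ)
    (hb : ∀ i (j : Fin m), (M i (Fin.castAdd n j)).totalDegree ≤ b)
    (ha : ∀ i (j : Fin n), (M i (Fin.natAdd m j)).totalDegree ≤ a) :
    M.det.totalDegree ≤ m * b + n * a := by
  rw [Matrix.det_apply]
  apply totalDegree_finsetSum_le
  intro σ _
  have : (∏ i, M (σ i) i).totalDegree ≤ m * b + n * a := by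
    refine (totalDegree_finsetProd _ _).trans ?_
    rw [Fin.sum_univ_add]
    gcongr
    · refine (Finset.sum_le_sum fun j _ => hb _ j).trans (by simp)
    · refine (Finset.sum_le_sum fun j _ => ha _ j).trans (by simp)
  rcases Int.units_eq_one_or (Equiv.Perm.sign σ) with h | h <;> rw [h]
  · simpa using this
  · simpa [totalDegree_neg] using this

lemma evalZ (f : MvPolynomial (Fin 3) K) (z x y : K) : eval ![z, x, y] f =
    Polynomial.eval z (Polynomial.map (eval ![x, y]) (finSuccEquiv K 2 f)) := by
  rw [← eval_eq_eval_mv_eval']; rfl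

lemma elim (g h : MvPolynomial (Fin 3) K) (hg : Irreducible g) (hgh : ¬ g ∣ h) {b : ℕ}
    (hb : h.totalDegree ≤ b) (hb1 : 1 ≤ b) :
    ∃ r : MvPolynomial (Fin 2) K, r ≠ 0 ∧ r.totalDegree ≤ 2 * g.totalDegree * b ∧
      ∀ z x y, eval ![z, x, y] g = 0 → eval ![z, x, y] h = 0 → eval ![x, y] r = 0 := by
  set G := finSuccEquiv K 2 g with hG
  set H := finSuccEquiv K 2 h with hH
  have hGi : Irreducible G := (MulEquiv.irreducible_iff (finSuccEquiv K 2)).2 hg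
  have hGH : ¬ G ∣ H := fun hd => hgh ((map_dvd_iff (finSuccEquiv K 2)).1 hd)
  have hGd : G.natDegree ≤ g.totalDegree := by
    rw [natDegree_finSuccEquiv]; exact degreeOf_le_totalDegree _ _
  have hHd : H.natDegree ≤ h.totalDegree := by
    rw [natDegree_finSuccEquiv]; exact degreeOf_le_totalDegree _ _
  by_cases h0 : G.natDegree = 0
  · refine ⟨G.coeff 0, ?_, ?_, ?_⟩
    · intro h1
      apply hGi.ne_zero
      rw [Polynomial.eq_C_of_natDegree_eq_zero h0, h1, Polynomial.C_0]
    · refine (coeff_deg g 0).trans ?_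
      nlinarith
    · intro z x y h1 _
      rw [evalZ, ← hG, Polynomial.eq_C_of_natDegree_eq_zero h0] at h1
      simpa using h1
  · have hprim : G.IsPrimitive := hGi.isPrimitive h0
    set S := MvPolynomial (Fin 2) K
    let F := FractionRing S
    have hinj : Function.Injective (algebraMap S F) := IsFractionRing.injective S F
    have hGF : Irreducible (G.map (algebraMap S F)) :=
      (hprim.irreducible_iff_irreducible_map_fraction_map).1 hGi
    have hnd : ¬ G.map (algebraMap S F) ∣ H.map (algebraMap S F) := fun hd =>
      hGH (hprim.dvd_of_fraction_map_dvd_fraction_map hd)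
    have hcop : IsCoprime (G.map (algebraMap S F)) (H.map (algebraMap S F)) :=
      (hGF.coprime_iff_not_dvd).2 hnd
    have hres := Polynomial.resultant_ne_zero _ _ hcop
    rw [Polynomial.natDegree_map_eq_of_injective hinj, Polynomial.natDegree_map_eq_of_injective hinj,
      Polynomial.resultant_map_map] at hres
    refine ⟨Polynomial.resultant G H, ?_, ?_, ?_⟩
    · intro h1; apply hres; rw [h1, map_zero]
    · have := det_deg (Polynomial.sylvester G H G.natDegree H.natDegree) g.totalDegree h.totalDegree
        (by
          intro i j
          simp only [Polynomial.sylvester, Matrix.of_apply, Fin.addCases_left]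
          split
          · exact coeff_deg _ _
          · simp)
        (by
          intro i j
          simp only [Polynomial.sylvester, Matrix.of_apply, Fin.addCases_right]
          split
          · exact coeff_deg _ _
          · simp)
      refine this.trans ?_
      nlinarith [Nat.mul_le_mul hGd hb, Nat.mul_le_mul (hHd.trans hb) (le_refl g.totalDegree)]
    · intro z x y h1 h2
      obtain ⟨a, c, -, -, e⟩ := Polynomial.exists_mul_add_mul_eq_C_resultant G H le_rfl le_rfl (Or.inl h0)
      have e2 := congrArg (fun q => Polynomial.eval z (Polynomial.map (eval ![x, y]) q)) e
      rw [evalZ] at h1 h2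
      simp only [Polynomial.map_add, Polynomial.map_mul, Polynomial.eval_add, Polynomial.eval_mul,
        Polynomial.map_C, Polynomial.eval_C] at e2
      rw [← hG] at h1
      rw [← hH] at h2
      rw [h1, h2] at e2
      rw [← e2]; ring

lemma aeval2 (r : MvPolynomial (Fin 2) K) (v : Fin 2 → Polynomial K) (hv : ∀ i, (v i).natDegree ≤ 1)
    (hr : ∃ t, eval (fun i => (v i).eval t) r ≠ 0) (S : Finset K)
    (h : ∀ t ∈ S, eval (fun i => (v i).eval t) r = 0) : S.card ≤ r.totalDegree := by
  by_contra hlt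
  obtain ⟨t, ht⟩ := hr
  exact ht (vanish_line r v hv S (by omega) h t)

lemma ne_zero_pt [Infinite K] (r : MvPolynomial (Fin 2) K) (hr : r ≠ 0) :
    ∃ x y, eval ![x, y] r ≠ 0 := by
  by_contra hcon
  push Not at hcon
  apply hr
  apply MvPolynomial.funext
  intro v
  have := hcon (v 0) (v 1)
  rw [map_zero, ← this]; congr 2; funext i; fin_cases i <;> simp

lemma count_x [Infinite K] (r : MvPolynomial (Fin 2) K) (hr : r ≠ 0) (S : Finset K)
    (h : ∀ x ∈ S, ∀ y, eval ![x, y] r = 0) : S.card ≤ r.totalDegree := by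
  obtain ⟨x, y, hxy⟩ := ne_zero_pt r hr
  have e : ∀ t, (fun i => ((![Polynomial.X, Polynomial.C y] : Fin 2 → Polynomial K) i).eval t) = ![t, y] := by
    intro t; funext i; fin_cases i <;> simp
  refine aeval2 r ![Polynomial.X, Polynomial.C y] (by intro i; fin_cases i <;> simp) ⟨x, ?_⟩ S ?_
  · rwa [e]
  · intro t ht; rw [e]; exact h t ht y

lemma count_y [Infinite K] (r : MvPolynomial (Fin 2) K) (hr : r ≠ 0) (S : Finset K)
    (h : ∀ y ∈ S, ∀ x, eval ![x, y] r = 0) : S.card ≤ r.totalDegree := by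
  obtain ⟨x, y, hxy⟩ := ne_zero_pt r hr
  have e : ∀ t, (fun i => ((![Polynomial.C x, Polynomial.X] : Fin 2 → Polynomial K) i).eval t) = ![x, t] := by
    intro t; funext i; fin_cases i <;> simp
  refine aeval2 r ![Polynomial.C x, Polynomial.X] (by intro i; fin_cases i <;> simp) ⟨y, ?_⟩ S ?_
  · rwa [e]
  · intro t ht; rw [e]; exact h t ht x

lemma bezoutL [Infinite K] (g h : MvPolynomial (Fin 3) K) (hg : Irreducible g) (hgh : ¬ g ∣ h) {b : ℕ}
    (hb : h.totalDegree ≤ b) (hb1 : 1 ≤ b) (A : Finset (K × K × K))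
    (hA : Set.InjOn (fun q : K × K × K => q.1) A)
    (h1 : ∀ i ∈ A, VL g i) (h2 : ∀ i ∈ A, VL h i) : A.card ≤ 2 * g.totalDegree * b := by
  classical
  obtain ⟨r, r0, rd, hr⟩ := elim g h hg hgh hb hb1
  rw [← Finset.card_image_of_injOn hA]
  refine (count_x r r0 _ ?_).trans rd
  intro x hx y
  obtain ⟨i, hi, rfl⟩ := Finset.mem_image.1 hx
  exact hr _ _ _ (h1 i hi y) (h2 i hi y)

lemma bezoutM [Infinite K] (g h : MvPolynomial (Fin 3) K) (hg : Irreducible g) (hgh : ¬ g ∣ h) {b : ℕ}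
    (hb : h.totalDegree ≤ b) (hb1 : 1 ≤ b) (B : Finset (K × K × K))
    (hB : Set.InjOn (fun q : K × K × K => q.1) B)
    (h1 : ∀ i ∈ B, VM g i) (h2 : ∀ i ∈ B, VM h i) : B.card ≤ 2 * g.totalDegree * b := by
  classical
  obtain ⟨r, r0, rd, hr⟩ := elim g h hg hgh hb hb1
  rw [← Finset.card_image_of_injOn hB]
  refine (count_y r r0 _ ?_).trans rd
  intro y hy x
  obtain ⟨i, hi, rfl⟩ := Finset.mem_image.1 hy
  exact hr _ _ _ (h1 i hi x) (h2 i hi x)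
end Rud
end

open Finset
noncomputable section
namespace Rud
variable {K : Type*} [Field K] [DecidableEq K]
set_option linter.unusedSectionVars false
set_option linter.unusedDecidableInType false
open MvPolynomial

instance (i j : K × K × K) : Decidable (Inc i j) := by unfold Inc; infer_instance

def II (A B : Finset (K × K × K)) : ℕ := #{q ∈ A ×ˢ B | Inc q.1 q.2}

def NbM (B : Finset (K × K × K)) (i : K × K × K) : Finset (K × K × K) := {j ∈ B | Inc i j}
def NbL (A : Finset (K × K × K)) (j : K × K × K) : Finset (K × K × K) := {i ∈ A | Inc i j}

def ShL (s : ℕ) (A B : Finset (K × K × K)) : Prop :=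
  ∀ i ∈ A, ∀ i' ∈ A, i ≠ i' → ∀ B' ⊆ B, (∀ j ∈ B', Inc i j ∧ Inc i' j) → #B' ≤ s
def ShM (s : ℕ) (A B : Finset (K × K × K)) : Prop :=
  ∀ j ∈ B, ∀ j' ∈ B, j ≠ j' → ∀ A' ⊆ A, (∀ i ∈ A', Inc i j ∧ Inc i j') → #A' ≤ s
def Dist (A : Finset (K × K × K)) : Prop := Set.InjOn (fun q : K × K × K => q.1) A

lemma ShL.mono {s : ℕ} {A B A' B' : Finset (K × K × K)} (h : ShL s A B) (hA : A' ⊆ A) (hB : B' ⊆ B) :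
    ShL s A' B' := fun i hi i' hi' hne C hC hc => h i (hA hi) i' (hA hi') hne C (hC.trans hB) hc
lemma ShM.mono {s : ℕ} {A B A' B' : Finset (K × K × K)} (h : ShM s A B) (hA : A' ⊆ A) (hB : B' ⊆ B) :
    ShM s A' B' := fun i hi i' hi' hne C hC hc => h i (hB hi) i' (hB hi') hne C (hC.trans hA) hc
lemma Dist.mono {A A' : Finset (K × K × K)} (h : Dist A) (hA : A' ⊆ A) : Dist A' :=
  Set.InjOn.mono (by exact_mod_cast hA) h

lemma II_le_mul (A B : Finset (K × K × K)) : II A B ≤ #A * #B := by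
  unfold II; refine (card_filter_le _ _).trans (by rw [card_product])
lemma II_empty_left (B : Finset (K × K × K)) : II ∅ B = 0 := by simp [II]
lemma II_empty_right (B : Finset (K × K × K)) : II B ∅ = 0 := by simp [II]

lemma bip (s : ℕ) (A B : Finset (K × K × K)) (hL : ShL s A B) (hM : ShM s A B)
    (h : ∀ i ∈ A, ∀ j ∈ B, Inc i j) :
    (II A B : ℝ) ≤ #A + #B + s * Real.sqrt (#A * #B) := by
  have h0 : (II A B : ℝ) ≤ #A * #B := by exact_mod_cast II_le_mul A B
  have hs : (0:ℝ) ≤ s * Real.sqrt (#A * #B) := by positivity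
  have hA0 : (0 : ℝ) ≤ #A := by positivity
  have hB0 : (0 : ℝ) ≤ #B := by positivity
  by_cases hA : #A ≤ 1
  · have : (#A : ℝ) ≤ 1 := by exact_mod_cast hA
    nlinarith
  by_cases hB : #B ≤ 1
  · have : (#B : ℝ) ≤ 1 := by exact_mod_cast hB
    nlinarith
  obtain ⟨i, hi, i', hi', hne⟩ := Finset.one_lt_card.1 (by omega : 1 < #A)
  obtain ⟨j, hj, j', hj', hne'⟩ := Finset.one_lt_card.1 (by omega : 1 < #B)
  have h1 : (#B : ℝ) ≤ s := by
    exact_mod_cast hL i hi i' hi' hne B Subset.rfl fun k hk => ⟨h i hi k hk, h i' hi' k hk⟩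
  have h2 : (#A : ℝ) ≤ s := by
    exact_mod_cast hM j hj j' hj' hne' A Subset.rfl fun k hk => ⟨h k hk j hj, h k hk j' hj'⟩
  have h3 : Real.sqrt (#A * #B) ≤ s := by
    rw [Real.sqrt_le_left (by positivity)]; nlinarith
  have h4 : (#A : ℝ) * #B = Real.sqrt (#A * #B) * Real.sqrt (#A * #B) :=
    (Real.mul_self_sqrt (by positivity)).symm
  have := mul_le_mul_of_nonneg_right h3 (Real.sqrt_nonneg ((#A : ℝ) * #B))
  linarith

lemma deg_pos {g : MvPolynomial (Fin 3) K} (hg : Irreducible g) : 1 ≤ g.totalDegree := by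
  by_contra h
  have h0 : g.totalDegree = 0 := by omega
  rw [totalDegree_eq_zero_iff_eq_C] at h0
  have h1 : coeff 0 g ≠ 0 := by
    intro h2; rw [h2, C_0] at h0; exact hg.ne_zero h0
  apply hg.not_isUnit
  rw [h0]
  exact (isUnit_iff_ne_zero.2 h1).map C

lemma polyEval (c : Polynomial K) (v : Fin 3 → K) (i : Fin 3) :
    eval v (Polynomial.aeval (X i : MvPolynomial (Fin 3) K) c) = c.eval (v i) := by
  rw [Polynomial.aeval_def, Polynomial.hom_eval₂]
  simp only [eval_X]
  rw [show ((eval v).comp (algebraMap K (MvPolynomial (Fin 3) K))) = RingHom.id K by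
      ext; simp]
  rfl
lemma polyEval2 (c : Polynomial K) (v : Fin 2 → K) (i : Fin 2) :
    eval v (Polynomial.aeval (X i : MvPolynomial (Fin 2) K) c) = c.eval (v i) := by
  rw [Polynomial.aeval_def, Polynomial.hom_eval₂]
  simp only [eval_X]
  rw [show ((eval v).comp (algebraMap K (MvPolynomial (Fin 2) K))) = RingHom.id K by
      ext; simp]
  rfl

lemma case2a [Infinite K] {p : ℕ} [CharP K p] (g : MvPolynomial (Fin 3) K) (hg : g ≠ 0)
    (hp : g.totalDegree < p) (h : pderiv 0 g = 0) (B : Finset (K × K × K)) (hB : Dist B)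
    (hv : ∀ j ∈ B, VM g j) : #B ≤ g.totalDegree := by
  obtain ⟨P, hP⟩ : ∃ P, eval P g ≠ 0 := by
    by_contra hcon
    push Not at hcon
    exact hg (MvPolynomial.funext fun v => by rw [hcon v, map_zero])
  by_contra hlt
  rw [← Finset.card_image_of_injOn hB] at hlt
  set v : Fin 3 → Polynomial K := ![Polynomial.C (P 0), Polynomial.C (P 1), Polynomial.X] with hv'
  have e : ∀ t, (fun i => (v i).eval t) = ![P 0, P 1, t] := by
    intro t; funext i; fin_cases i <;> simp [hv']
  have := vanish_line g v (by intro i; fin_cases i <;> simp [hv']) _ (not_le.1 hlt) (by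
    intro t ht
    obtain ⟨j, hj, rfl⟩ := Finset.mem_image.1 ht
    rw [e, indepZ g hp h _ (j.2.1 * P 1 - j.2.2)]
    exact hv j hj (P 1)) (P 2)
  rw [e] at this
  apply hP
  rw [← this]; congr 2; funext i; fin_cases i <;> simp

lemma case2c [Infinite K] {p : ℕ} [CharP K p] (g : MvPolynomial (Fin 3) K) (hg : Irreducible g)
    (hp : g.totalDegree < p) (hH : g ∣ HH g) (hZ : ¬ g ∣ pderiv 0 g)
    (A B : Finset (K × K × K)) (hA : Dist A)
    (hvA : ∀ i ∈ A, VL g i) (hvB : ∀ j ∈ B, VM g j) (m : K × K × K) (hm : m ∈ B)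
    (hmU : ¬ VM (pderiv 0 g) m) :
    ∃ A' ⊆ A, #A' ≤ g.totalDegree ∧ ∀ i ∈ A \ A', ∀ j ∈ B, Inc i j := by
  set c := aeval (vm m) (pderiv 0 g) with hc
  set e := aeval (vm m) (pderiv 2 g) with he
  have ec : ∀ x, c.eval x = eval (pm m x) (pderiv 0 g) := fun x => by
    rw [hc, eval_aeval_poly, vm_eval]
  have ee : ∀ x, e.eval x = eval (pm m x) (pderiv 2 g) := fun x => by
    rw [he, eval_aeval_poly, vm_eval]
  have hc0 : c ≠ 0 := by
    intro h; apply hmU; intro t; rw [← ec, h]; simp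
  set L : MvPolynomial (Fin 3) K := Polynomial.aeval (X 1) c * (X 0 - C m.2.1 * X 1 + C m.2.2)
    + Polynomial.aeval (X 1) e * (X 2 - C m.1) with hL
  have evL : ∀ v, eval v L = c.eval (v 1) * (v 0 - m.2.1 * v 1 + m.2.2) + e.eval (v 1) * (v 2 - m.1) := by
    intro v; rw [hL]; simp [polyEval]
  have hdvd : g ∣ L := by
    by_contra hnd
    obtain ⟨r, r0, -, hr⟩ := elim g L hg hnd (b := max 1 L.totalDegree) (le_max_right _ _) (le_max_left _ _)
    have h0 : r * Polynomial.aeval (X 0) c = 0 := by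
      apply MvPolynomial.funext
      intro v
      rw [map_mul, polyEval2, map_zero]
      by_cases hx : c.eval (v 0) = 0
      · rw [hx, mul_zero]
      · have h1 := ruled g hp hg.prime hH hZ (pm m (v 0)) (hvB m hm _) ((v 1 - m.1) / c.eval (v 0))
        rw [← ec, ← ee] at h1
        have h2 : (pm m (v 0)) 2 + (v 1 - m.1) / c.eval (v 0) * c.eval (v 0) = v 1 := by
          field_simp; simp [pm]
        have h3 : (pm m (v 0)) 1 = v 0 := by simp [pm]
        rw [h2, h3] at h1
        have h4 := hr _ _ _ h1 (by
          rw [evL]; simp [pm]; field_simp; ring)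
        have : v = ![v 0, v 1] := by funext i; fin_cases i <;> simp
        rw [this, h4, zero_mul]
    rcases mul_eq_zero.1 h0 with h1 | h1
    · exact r0 h1
    · apply hc0
      apply Polynomial.funext
      intro x
      have := polyEval2 c (fun _ => x) 0
      rw [h1, map_zero] at this
      rw [← this]; simp
  refine ⟨{i ∈ A | c.eval i.1 = 0}, filter_subset _ _, ?_, ?_⟩
  · have hd : c.natDegree ≤ g.totalDegree := by
      have := aeval_natDegree_le (pderiv 0 g) le_rfl (vm m) (vm_deg m)
      rw [← hc] at this
      have h2 := totalDegree_pderiv_le 0 g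
      omega
    refine le_trans ?_ hd
    rw [← Finset.card_image_of_injOn (hA.mono (filter_subset _ _))]
    refine le_trans (Finset.card_le_card ?_) ((Multiset.toFinset_card_le _).trans (Polynomial.card_roots' c))
    intro x hx
    obtain ⟨i, hi, rfl⟩ := Finset.mem_image.1 hx
    rw [Multiset.mem_toFinset, Polynomial.mem_roots hc0]
    exact (mem_filter.1 hi).2
  · intro i hi j hj
    simp only [mem_sdiff, mem_filter, not_and] at hi
    have hx := hi.2 hi.1
    obtain ⟨q, hq⟩ := hdvd
    have h1 : eval (pl i j.1) L = 0 := by rw [hq, map_mul, hvA i hi.1, zero_mul]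
    have h2 : eval (pm j i.1) L = 0 := by rw [hq, map_mul, hvB j hj, zero_mul]
    rw [evL] at h1 h2
    simp [pl, pm] at h1 h2
    unfold Inc
    apply mul_left_cancel₀ hx
    linear_combination h1 - h2

lemma irr [Infinite K] {p : ℕ} [CharP K p] (s : ℕ) (g : MvPolynomial (Fin 3) K) (hg : Irreducible g)
    (hp : g.totalDegree < p) (A B : Finset (K × K × K)) (hA : Dist A) (hB : Dist B)
    (hL : ShL s A B) (hM : ShM s A B)
    (hvA : ∀ i ∈ A, VL g i) (hvB : ∀ j ∈ B, VM g j) :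
    ∃ A' ⊆ A, ∃ B' ⊆ B, #A' ≤ 6 * g.totalDegree ^ 2 ∧ #B' ≤ 6 * g.totalDegree ^ 2 ∧
      (II (A \ A') (B \ B') : ℝ) ≤ #A + #B + s * Real.sqrt (#A * #B) := by
  have hd := deg_pos hg
  have pos : (0:ℝ) ≤ #A + #B + s * Real.sqrt (#A * #B) := by positivity
  by_cases hH : g ∣ HH g
  swap
  · refine ⟨A, Subset.rfl, ∅, empty_subset _, ?_, by simp, ?_⟩
    · have := bezoutL g (HH g) hg hH (HH_deg g) (by omega) A hA hvA (fun i hi => HH_vanish (hvA i hi))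
      nlinarith
    · rw [sdiff_self]; rw [show (⊥ : Finset (K × K × K)) = ∅ from rfl, II_empty_left]; simpa using pos
  have allB : #B ≤ 6 * g.totalDegree ^ 2 → ∃ A' ⊆ A, ∃ B' ⊆ B, #A' ≤ 6 * g.totalDegree ^ 2 ∧ #B' ≤ 6 * g.totalDegree ^ 2 ∧
      (II (A \ A') (B \ B') : ℝ) ≤ #A + #B + s * Real.sqrt (#A * #B) := by
    intro h
    refine ⟨∅, empty_subset _, B, Subset.rfl, by simp, h, ?_⟩
    rw [sdiff_self]; rw [show (⊥ : Finset (K × K × K)) = ∅ from rfl, II_empty_right]; simpa using pos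
  by_cases hZ : g ∣ pderiv 0 g
  · have hZ0 : pderiv 0 g = 0 := by
      by_contra h0
      obtain ⟨q, hq⟩ := hZ
      have hq0 : q ≠ 0 := by rintro rfl; exact h0 (by rw [hq, mul_zero])
      have h1 := totalDegree_mul_of_isDomain hg.ne_zero hq0
      rw [← hq] at h1
      have := totalDegree_pderiv_le 0 g
      omega
    apply allB
    have := case2a g hg.ne_zero hp hZ0 B hB hvB
    nlinarith
  by_cases hU : ∀ j ∈ B, VM (pderiv 0 g) j
  · apply allB
    have h2 := totalDegree_pderiv_le 0 g
    have := bezoutM g (pderiv 0 g) hg hZ (b := g.totalDegree) (by omega) hd B hB hvB hU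
    nlinarith
  · push Not at hU
    obtain ⟨m, hm, hmU⟩ := hU
    obtain ⟨A', hA', hc, hinc⟩ := case2c g hg hp hH hZ A B hA hvA hvB m hm hmU
    refine ⟨A', hA', ∅, empty_subset _, by nlinarith, by simp, ?_⟩
    rw [sdiff_empty]
    refine (bip s (A \ A') B (hL.mono sdiff_subset Subset.rfl) (hM.mono sdiff_subset Subset.rfl) hinc).trans ?_
    have : (#(A \ A') : ℝ) ≤ #A := by exact_mod_cast card_le_card sdiff_subset
    gcongr
end Rud
end

open Finset
noncomputable section
namespace Rud
variable {K : Type*} [Field K] [DecidableEq K]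
set_option linter.unusedSectionVars false
set_option linter.unusedDecidableInType false
open MvPolynomial

lemma II_eq_sumL (A B : Finset (K × K × K)) : II A B = ∑ i ∈ A, #(NbM B i) := by
  unfold II NbM
  rw [card_filter, sum_product]
  simp only [card_filter]
lemma II_eq_sumM (A B : Finset (K × K × K)) : II A B = ∑ j ∈ B, #(NbL A j) := by
  unfold II NbL
  rw [card_filter, sum_product_right]
  simp only [card_filter]
lemma II_mono {A B A' B' : Finset (K × K × K)} (hA : A ⊆ A') (hB : B ⊆ B') : II A B ≤ II A' B' :=
  card_le_card (filter_subset_filter _ (product_subset_product hA hB))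
lemma II_union_left (A A' B : Finset (K × K × K)) : II (A ∪ A') B ≤ II A B + II A' B := by
  unfold II; rw [union_product, filter_union]; exact card_union_le _ _
lemma II_union_right (A B B' : Finset (K × K × K)) : II A (B ∪ B') ≤ II A B + II A B' := by
  unfold II; rw [product_union, filter_union]; exact card_union_le _ _

lemma VM_of_nb (g : MvPolynomial (Fin 3) K) (A : Finset (K × K × K)) (hA : Dist A)
    (hvA : ∀ i ∈ A, VL g i) (j : K × K × K) (h : g.totalDegree < #(NbL A j)) : VM g j := by
  have hN : NbL A j ⊆ A := filter_subset _ _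
  rw [← Finset.card_image_of_injOn (hA.mono hN)] at h
  refine VM_of g j _ h ?_
  intro t ht
  obtain ⟨i, hi, rfl⟩ := Finset.mem_image.1 ht
  rw [← inc_pt (mem_filter.1 hi).2]
  exact hvA i (hN hi) _
lemma VL_of_nb (g : MvPolynomial (Fin 3) K) (B : Finset (K × K × K)) (hB : Dist B)
    (hvB : ∀ i ∈ B, VM g i) (i : K × K × K) (h : g.totalDegree < #(NbM B i)) : VL g i := by
  have hN : NbM B i ⊆ B := filter_subset _ _
  rw [← Finset.card_image_of_injOn (hB.mono hN)] at h
  refine VL_of g i _ h ?_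
  intro t ht
  obtain ⟨j, hj, rfl⟩ := Finset.mem_image.1 ht
  rw [inc_pt (mem_filter.1 hj).2]
  exact hvB j (hN hj) _

lemma crossM (g : MvPolynomial (Fin 3) K) (A B : Finset (K × K × K)) (hA : Dist A)
    (hvA : ∀ i ∈ A, VL g i) (hB : ∀ j ∈ B, ¬ VM g j) : II A B ≤ g.totalDegree * #B := by
  rw [II_eq_sumM, mul_comm, ← smul_eq_mul]
  refine sum_le_card_nsmul _ _ _ fun j hj => ?_
  by_contra h
  exact hB j hj (VM_of_nb g A hA hvA j (not_le.1 h))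
lemma crossL (g : MvPolynomial (Fin 3) K) (A B : Finset (K × K × K)) (hB : Dist B)
    (hvB : ∀ i ∈ B, VM g i) (hA : ∀ j ∈ A, ¬ VL g j) : II A B ≤ g.totalDegree * #A := by
  rw [II_eq_sumL, mul_comm, ← smul_eq_mul]
  refine sum_le_card_nsmul _ _ _ fun j hj => ?_
  by_contra h
  exact hA j hj (VL_of_nb g B hB hvB j (not_le.1 h))

lemma poly_mul_zero [Infinite K] (v : Fin 3 → Polynomial K) (f g : MvPolynomial (Fin 3) K)
    (h : ∀ t, eval (fun i => (v i).eval t) (f * g) = 0) (hf : ¬ ∀ t, eval (fun i => (v i).eval t) f = 0) :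
    ∀ t, eval (fun i => (v i).eval t) g = 0 := by
  have h0 : aeval v f * aeval v g = 0 := by
    rw [← map_mul]; apply Polynomial.funext; intro t; rw [eval_aeval_poly, h]; simp
  rcases mul_eq_zero.1 h0 with h1 | h1
  · exact absurd (fun t => by rw [← eval_aeval_poly, h1]; simp) hf
  · intro t; rw [← eval_aeval_poly, h1]; simp
lemma VL_mul [Infinite K] {f g : MvPolynomial (Fin 3) K} {i} (h : VL (f * g) i) (hf : ¬ VL f i) : VL g i := by
  have := poly_mul_zero (vl i) f g
  simp only [vl_eval] at this
  exact this h hf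
lemma VM_mul [Infinite K] {f g : MvPolynomial (Fin 3) K} {i} (h : VM (f * g) i) (hf : ¬ VM f i) : VM g i := by
  have := poly_mul_zero (vm i) f g
  simp only [vm_eval] at this
  exact this h hf

lemma sqrt_cs (a b c d : ℝ) (ha : 0 ≤ a) (hb : 0 ≤ b) (hc : 0 ≤ c) (hd : 0 ≤ d) :
    Real.sqrt (a * b) + Real.sqrt (c * d) ≤ Real.sqrt ((a + c) * (b + d)) := by
  apply Real.le_sqrt_of_sq_le
  rw [add_sq, Real.sq_sqrt (by positivity), Real.sq_sqrt (by positivity), mul_assoc, ← Real.sqrt_mul (by positivity)]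
  have : Real.sqrt (a * b * (c * d)) ≤ (a * d + b * c) / 2 := by
    rw [Real.sqrt_le_left (by positivity)]
    nlinarith [sq_nonneg (a * d - b * c)]
  nlinarith

set_option maxHeartbeats 1000000 in
lemma gen [Infinite K] {p : ℕ} [CharP K p] (s : ℕ) (f : MvPolynomial (Fin 3) K) (hf : f ≠ 0)
    (hp : f.totalDegree < p) (A B : Finset (K × K × K)) (hA : Dist A) (hB : Dist B)
    (hL : ShL s A B) (hM : ShM s A B)
    (hvA : ∀ i ∈ A, VL f i) (hvB : ∀ j ∈ B, VM f j) :
    ∃ A' ⊆ A, ∃ B' ⊆ B, #A' ≤ 6 * f.totalDegree ^ 2 ∧ #B' ≤ 6 * f.totalDegree ^ 2 ∧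
      (II (A \ A') (B \ B') : ℝ) ≤ f.totalDegree * (#A + #B) + (#A + #B) + s * Real.sqrt (#A * #B) := by
  classical
  induction f using UniqueFactorizationMonoid.induction_on_prime generalizing A B with
  | h₁ => exact absurd rfl hf
  | h₂ x hx =>
    refine ⟨∅, empty_subset _, ∅, empty_subset _, by simp, by simp, ?_⟩
    have : A = ∅ := by
      rw [eq_empty_iff_forall_notMem]
      intro i hi
      have h1 := hvA i hi 0
      have h2 := hx.map (eval (pl i 0))
      rw [h1] at h2
      exact not_isUnit_zero h2
    rw [this, empty_sdiff, II_empty_left, Nat.cast_zero]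
    positivity
  | h₃ f g hf0 hg ih =>
    have hdeg := totalDegree_mul_of_isDomain hg.ne_zero hf0
    rw [hdeg] at hp ⊢
    set d := f.totalDegree
    set e := g.totalDegree
    obtain ⟨Ag, hAg⟩ : ∃ Ag, Ag = {i ∈ A | VL g i} := ⟨_, rfl⟩
    obtain ⟨A1, hA1⟩ : ∃ A1, A1 = {i ∈ A | ¬ VL g i} := ⟨_, rfl⟩
    obtain ⟨Bg, hBg⟩ : ∃ Bg, Bg = {i ∈ B | VM g i} := ⟨_, rfl⟩
    obtain ⟨B1, hB1⟩ : ∃ B1, B1 = {i ∈ B | ¬ VM g i} := ⟨_, rfl⟩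
    have sAg : Ag ⊆ A := hAg ▸ filter_subset _ _
    have sA1 : A1 ⊆ A := hA1 ▸ filter_subset _ _
    have sBg : Bg ⊆ B := hBg ▸ filter_subset _ _
    have sB1 : B1 ⊆ B := hB1 ▸ filter_subset _ _
    have cA : #A = #Ag + #A1 := by rw [hAg, hA1]; exact (card_filter_add_card_filter_not _).symm
    have cB : #B = #Bg + #B1 := by rw [hBg, hB1]; exact (card_filter_add_card_filter_not _).symm
    have uA : A ⊆ Ag ∪ A1 := by rw [hAg, hA1, filter_union_filter_not_eq]
    have uB : B ⊆ Bg ∪ B1 := by rw [hBg, hB1, filter_union_filter_not_eq]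
    have vAg : ∀ i ∈ Ag, VL g i := by rw [hAg]; intro i hi; exact (mem_filter.1 hi).2
    have vBg : ∀ i ∈ Bg, VM g i := by rw [hBg]; intro i hi; exact (mem_filter.1 hi).2
    have nA1 : ∀ i ∈ A1, ¬ VL g i := by rw [hA1]; intro i hi; exact (mem_filter.1 hi).2
    have nB1 : ∀ i ∈ B1, ¬ VM g i := by rw [hB1]; intro i hi; exact (mem_filter.1 hi).2
    have vA1 : ∀ i ∈ A1, VL f i := fun i hi => VL_mul (hvA i (sA1 hi)) (nA1 i hi)
    have vB1 : ∀ i ∈ B1, VM f i := fun i hi => VM_mul (hvB i (sB1 hi)) (nB1 i hi)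
    obtain ⟨P, hP, Q, hQ, cP, cQ, hPQ⟩ := irr (p := p) s g hg.irreducible (by omega) Ag Bg (hA.mono sAg) (hB.mono sBg)
      (hL.mono sAg sBg) (hM.mono sAg sBg) vAg vBg
    obtain ⟨P1, hP1, Q1, hQ1, cP1, cQ1, hPQ1⟩ := ih hf0 (by omega) A1 B1 (hA.mono sA1) (hB.mono sB1)
      (hL.mono sA1 sB1) (hM.mono sA1 sB1) vA1 vB1
    have x1 := crossM g Ag B1 (hA.mono sAg) vAg nB1
    have x2 := crossL g A1 Bg (hB.mono sBg) vBg nA1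
    refine ⟨P ∪ P1, union_subset (hP.trans sAg) (hP1.trans sA1), Q ∪ Q1,
      union_subset (hQ.trans sBg) (hQ1.trans sB1), ?_, ?_, ?_⟩
    · refine (card_union_le _ _).trans ?_
      nlinarith [Nat.zero_le (d * e)]
    · refine (card_union_le _ _).trans ?_
      nlinarith [Nat.zero_le (d * e)]
    · have sub1 : A \ (P ∪ P1) ⊆ (Ag \ P) ∪ (A1 \ P1) := by
        intro i hi
        have h1 := uA (mem_sdiff.1 hi).1
        simp only [mem_sdiff, mem_union, not_or] at hi h1 ⊢
        tauto
      have sub2 : B \ (Q ∪ Q1) ⊆ (Bg \ Q) ∪ (B1 \ Q1) := by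
        intro i hi
        have h1 := uB (mem_sdiff.1 hi).1
        simp only [mem_sdiff, mem_union, not_or] at hi h1 ⊢
        tauto
      have tot : II (A \ (P ∪ P1)) (B \ (Q ∪ Q1)) ≤ II (Ag \ P) (Bg \ Q) + e * #B1 + (e * #A1 + II (A1 \ P1) (B1 \ Q1)) := by
        refine (II_mono sub1 sub2).trans ?_
        refine (II_union_left _ _ _).trans (add_le_add ?_ ?_)
        · refine (II_union_right _ _ _).trans (add_le_add le_rfl ?_)
          exact (II_mono sdiff_subset sdiff_subset).trans x1
        · refine (II_union_right _ _ _).trans (add_le_add ?_ le_rfl)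
          exact (II_mono sdiff_subset sdiff_subset).trans x2
      have tot' : (II (A \ (P ∪ P1)) (B \ (Q ∪ Q1)) : ℝ) ≤ II (Ag \ P) (Bg \ Q) + e * #B1 + (e * #A1 + II (A1 \ P1) (B1 \ Q1)) := by
        exact_mod_cast tot
      have cs := mul_le_mul_of_nonneg_left (sqrt_cs (#Ag) (#Bg) (#A1) (#B1) (Nat.cast_nonneg _) (Nat.cast_nonneg _) (Nat.cast_nonneg _) (Nat.cast_nonneg _)) (Nat.cast_nonneg (α := ℝ) s)
      rw [cA, cB]
      push_cast
      have q1 : (0:ℝ) ≤ e * #Ag := by positivity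
      have q2 : (0:ℝ) ≤ e * #Bg := by positivity
      have q3 : (0:ℝ) ≤ d * #Ag := by positivity
      have q4 : (0:ℝ) ≤ d * #Bg := by positivity
      linarith
end Rud
end

open Finset
noncomputable section
namespace Rud
variable {K : Type*} [Field K] [DecidableEq K]
set_option linter.unusedSectionVars false
set_option linter.unusedDecidableInType false
open MvPolynomial

lemma exists_poly [Infinite K] (S : Finset (K × K × K)) (n : ℕ) (h : 3 * #S ≤ n ^ 2) :
    ∃ f : MvPolynomial (Fin 3) K, f ≠ 0 ∧ f.totalDegree ≤ 3 * n ∧ ∀ i ∈ S, VL f i := by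
  obtain ⟨T, hT⟩ := Infinite.exists_subset_card_eq K (3 * n + 1)
  let ex : (Fin 3 → Fin (n + 1)) → (Fin 3 →₀ ℕ) := fun e => Finsupp.equivFunOnFinite.symm fun i => (e i : ℕ)
  have exinj : Function.Injective ex := by
    intro e e' hee
    funext i
    have := DFunLike.congr_fun hee i
    simpa [ex, Fin.ext_iff] using this
  let F : ((Fin 3 → Fin (n + 1)) → K) →ₗ[K] MvPolynomial (Fin 3) K :=
    Fintype.linearCombination K (fun e => monomial (ex e) (1 : K))
  have hF : ∀ c, F c = ∑ e, monomial (ex e) (c e) := by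
    intro c; simp [F, Fintype.linearCombination_apply, smul_monomial]
  let Φ : ((Fin 3 → Fin (n + 1)) → K) →ₗ[K] (S × T → K) :=
    LinearMap.pi fun q => (aeval (pl q.1.1 q.2.1)).toLinearMap.comp F
  have hker : LinearMap.ker Φ ≠ ⊥ := by
    apply LinearMap.ker_ne_bot_of_finrank_lt
    rw [Module.finrank_fintype_fun_eq_card, Module.finrank_fintype_fun_eq_card]
    simp only [Fintype.card_prod, Fintype.card_coe, hT, Fintype.card_fun, Fintype.card_fin]
    nlinarith
  obtain ⟨c, hc, hc0⟩ := (Submodule.ne_bot_iff _).1 hker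
  have hcoef : ∀ e, coeff (ex e) (F c) = c e := by
    intro e
    rw [hF, coeff_sum, Finset.sum_eq_single e]
    · simp
    · intro b _ hb
      rw [coeff_monomial, if_neg fun h => hb (exinj h)]
    · simp
  have hdeg : (F c).totalDegree ≤ 3 * n := by
    rw [hF]
    apply totalDegree_finsetSum_le
    intro e _
    refine (totalDegree_monomial_le _ _).trans ?_
    rw [Finsupp.sum_fintype _ _ (by simp), Fin.sum_univ_three]
    simp only [ex, Finsupp.equivFunOnFinite_symm_apply_apply, id]
    have := (e 0).2
    have := (e 1).2
    have := (e 2).2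
    omega
  refine ⟨F c, ?_, hdeg, ?_⟩
  · intro h0
    apply hc0
    funext e
    rw [← hcoef, h0]; simp
  · intro i hi
    refine VL_of _ _ T (by omega) ?_
    intro t ht
    have := congrFun (LinearMap.mem_ker.1 hc) (⟨i, hi⟩, ⟨t, ht⟩)
    simpa [Φ, aeval_eq_eval] using this
end Rud
end

open Finset
noncomputable section
namespace Rud
variable {K : Type*} [Field K] [DecidableEq K]
set_option linter.unusedSectionVars false
set_option linter.unusedDecidableInType false
open MvPolynomial

lemma NbL_insert (S : Finset (K × K × K)) (l j : K × K × K) (hl : l ∉ S) :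
    #(NbL (insert l S) j) = #(NbL S j) + if Inc l j then 1 else 0 := by
  unfold NbL
  rw [filter_insert]
  split
  · rw [card_insert_of_notMem (by simp [hl])]
  · simp

lemma greedy (A B : Finset (K × K × K)) (D : ℕ) (ρ : ℝ) :
    ∃ S ⊆ A, ρ * #S ≤ #B * (D + 1) ∧ ∀ l ∈ A, l ∉ S →
      (#(NbM B l) : ℝ) ≤ ρ + #(NbM {j ∈ B | D < #(NbL S j)} l) := by
  let φ : Finset (K × K × K) → ℕ := fun S => ∑ j ∈ B, min #(NbL S j) (D + 1)
  obtain ⟨S, hS, hmax⟩ := exists_max_image A.powerset (fun S => (φ S : ℝ) - ρ * #S) ⟨∅, by simp⟩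
  rw [mem_powerset] at hS
  refine ⟨S, hS, ?_, ?_⟩
  · have h0 := hmax ∅ (by simp)
    simp only [card_empty, Nat.cast_zero, mul_zero, sub_zero] at h0
    have h1 : φ S ≤ #B * (D + 1) := by
      rw [← smul_eq_mul]
      exact sum_le_card_nsmul _ _ _ fun j _ => min_le_right _ _
    have h2 : (φ S : ℝ) ≤ #B * (D + 1) := by exact_mod_cast h1
    have h3 : (0 : ℝ) ≤ φ ∅ := Nat.cast_nonneg _
    linarith
  · intro l hl hlS
    have h0 := hmax (insert l S) (by rw [mem_powerset]; exact insert_subset hl hS)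
    simp only [card_insert_of_notMem hlS] at h0
    have h1 : φ S + #{j ∈ B | Inc l j ∧ ¬ D < #(NbL S j)} ≤ φ (insert l S) := by
      simp only [φ, card_filter]
      rw [← sum_add_distrib]
      refine sum_le_sum fun j _ => ?_
      rw [NbL_insert S l j hlS]
      by_cases h : Inc l j
      · by_cases h' : D < #(NbL S j)
        · simp [h, h']; omega
        · simp only [h, h', not_false_eq_true, and_self, if_true]; omega
      · simp [h]
    have h2 : #(NbM B l) = #(NbM {j ∈ B | D < #(NbL S j)} l) + #{j ∈ B | Inc l j ∧ ¬ D < #(NbL S j)} := by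
      unfold NbM
      rw [← card_filter_add_card_filter_not (s := {j ∈ B | Inc l j}) (fun j => D < #(NbL S j))]
      rw [filter_filter, filter_filter, filter_filter]
      congr 2
      ext j; simp only [mem_filter]; tauto
    have h1' : (φ S : ℝ) + #{j ∈ B | Inc l j ∧ ¬ D < #(NbL S j)} ≤ φ (insert l S) := by exact_mod_cast h1
    have h2' : (#(NbM B l) : ℝ) = #(NbM {j ∈ B | D < #(NbL S j)} l) + #{j ∈ B | Inc l j ∧ ¬ D < #(NbL S j)} := by
      exact_mod_cast h2
    push_cast at h0
    linarith

lemma II_erase_left (A B : Finset (K × K × K)) (l) (hl : l ∈ A) : II A B = II (A.erase l) B + #(NbM B l) := by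
  rw [II_eq_sumL, II_eq_sumL, sum_erase_add _ _ hl]
lemma II_erase_right (A B : Finset (K × K × K)) (l) (hl : l ∈ B) : II A B = II A (B.erase l) + #(NbL A l) := by
  rw [II_eq_sumM, II_eq_sumM, sum_erase_add _ _ hl]

lemma sqrt_pred (a : ℕ) (ha : 1 ≤ a) : Real.sqrt ((a - 1 : ℕ) : ℝ) + 1 / (2 * Real.sqrt a) ≤ Real.sqrt a := by
  have h1 : (1:ℝ) ≤ a := by exact_mod_cast ha
  have h0 : 0 < Real.sqrt a := Real.sqrt_pos.2 (by linarith)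
  have e1 := Real.sq_sqrt (by linarith : (0:ℝ) ≤ a)
  rw [Nat.cast_sub ha, Nat.cast_one]
  have e2 := Real.sq_sqrt (by linarith : (0:ℝ) ≤ (a:ℝ) - 1)
  rw [← le_sub_iff_add_le, div_eq_mul_inv, one_mul]
  have : Real.sqrt (a - 1) ≤ Real.sqrt a - (2 * Real.sqrt a)⁻¹ := by
    rw [Real.sqrt_le_left]
    · have : (Real.sqrt a - (2 * Real.sqrt a)⁻¹) ^ 2 = Real.sqrt a ^ 2 - 1 + (2 * Real.sqrt a)⁻¹ ^ 2 := by
        field_simp; ring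
      rw [this, e1]; nlinarith [sq_nonneg ((2 * Real.sqrt a)⁻¹)]
    · rw [sub_nonneg, inv_le_comm₀ (by positivity) h0]
      have : 1 ≤ Real.sqrt a := Real.one_le_sqrt.2 h1
      have := inv_le_one_of_one_le₀ this
      linarith
  linarith

lemma numer (α β ν : ℝ) (hα : 0 < α) (hβ : 0 < β) (hν : 0 < ν) (h1 : α ≤ ν) (h2 : β ≤ ν)
    (h : 10000 * ν < α * β) : ∃ n : ℕ,
      (3 * n + 1 : ℝ) ≤ 10000 * (ν * β) / (4 * α) ∧ (3 * n + 1 : ℝ) ≤ 10000 * (ν * α) / (4 * β) ∧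
      (3 * n + 1 : ℝ) ≤ 336 * (α * β) / (ν * 10000) ∧
      ∀ S : ℝ, 10000 * (ν * β) / (4 * α) * S ≤ β ^ 2 * (3 * n + 1) → 3 * S ≤ n ^ 2 := by
  set x := 84 * (α * β) / (ν * 10000) with hx
  have hx0 : 84 ≤ x := by
    rw [hx, le_div_iff₀ (by positivity)]; linarith
  have n1 : x ≤ ⌈x⌉₊ := Nat.le_ceil x
  have n2 : (⌈x⌉₊ : ℝ) < x + 1 := Nat.ceil_lt_add_one (by linarith)
  have n3 : (3 * ⌈x⌉₊ + 1 : ℝ) ≤ 4 * x := by linarith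
  have n4 : 4 * x = 336 * (α * β) / (ν * 10000) := by rw [hx]; ring
  have ha2 : α * α ≤ ν * ν := mul_le_mul h1 h1 hα.le hν.le
  have hb2 : β * β ≤ ν * ν := mul_le_mul h2 h2 hβ.le hν.le
  refine ⟨⌈x⌉₊, n3.trans ?_, n3.trans ?_, n3.trans n4.le, ?_⟩
  · rw [n4, div_le_div_iff₀ (by positivity) (by positivity)]
    nlinarith [mul_le_mul_of_nonneg_left ha2 hβ.le, mul_pos hβ (mul_pos hν hν)]
  · rw [n4, div_le_div_iff₀ (by positivity) (by positivity)]
    nlinarith [mul_le_mul_of_nonneg_left hb2 hα.le, mul_pos hα (mul_pos hν hν)]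
  · intro S hS
    have e1 : β ^ 2 * (3 * ⌈x⌉₊ + 1 : ℝ) ≤ β ^ 2 * (4 * x) := by gcongr
    have e2 : 10000 * (ν * β) / (4 * α) * S ≤ β ^ 2 * (4 * x) := hS.trans e1
    have e3 : x * (ν * 10000) = 84 * (α * β) := by rw [hx]; field_simp
    have e4 : 10000 * (ν * β) * S ≤ 16 * α * β ^ 2 * x := by
      have := mul_le_mul_of_nonneg_right e2 (by positivity : 0 ≤ 4 * α)
      rw [show 10000 * (ν * β) / (4 * α) * S * (4 * α) = 10000 * (ν * β) * S by field_simp] at this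
      linarith
    have e5 : 84 * (β * ν * 10000 * S) ≤ (β * ν * 10000) * (16 * x ^ 2) := by
      have : 16 * α * β ^ 2 * x * 84 = (β * ν * 10000) * (16 * x ^ 2) := by
        calc 16 * α * β ^ 2 * x * 84 = 16 * β * x * (84 * (α * β)) := by ring
          _ = _ := by rw [← e3]; ring
      linarith
    have e6 : 84 * S ≤ 16 * x ^ 2 := by
      have hp : 0 < β * ν * 10000 := by positivity
      by_contra hcon
      push Not at hcon
      have := mul_lt_mul_of_pos_left hcon hp
      linarith
    have e7 : x ^ 2 ≤ (⌈x⌉₊ : ℝ) ^ 2 := by gcongr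
    nlinarith [sq_nonneg x]

lemma fin_num (α β ν X I1 I2 I3 s : ℝ) (hα : 0 < α) (hβ : 0 < β) (hν : 0 < ν) (h1 : α ≤ ν) (h2 : β ≤ ν)
    (hs : s ≤ ν) (hX : X ≤ 336 * (α * β) / (ν * 10000))
    (e1 : I1 ≤ X * (α ^ 2 + β ^ 2) + s * (α * β)) (e2 : I2 ≤ 10000 * (ν * (3 * X) * β))
    (e3 : I3 ≤ 10000 * (ν * α * (3 * X))) : I1 + I2 + I3 ≤ 10000 * (ν * α * β) := by
  have hab := mul_pos hα hβ
  have hX' : X * ν ≤ 336 / 10000 * (α * β) := by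
    rw [le_div_iff₀ (by positivity)] at hX; linarith
  have k1 : X * α ^ 2 ≤ 336 / 10000 * (ν * α * β) := by
    have hXa : X * α ≤ 336 / 10000 * (α * β) := by
      by_cases h0 : 0 ≤ X
      · exact (mul_le_mul_of_nonneg_left h1 h0).trans hX'
      · nlinarith
    calc X * α ^ 2 = (X * α) * α := by ring
      _ ≤ 336 / 10000 * (α * β) * α := by gcongr
      _ ≤ 336 / 10000 * (α * β) * ν := by gcongr
      _ = _ := by ring
  have k2 : X * β ^ 2 ≤ 336 / 10000 * (ν * α * β) := by
    have hXa : X * β ≤ 336 / 10000 * (α * β) := by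
      by_cases h0 : 0 ≤ X
      · exact (mul_le_mul_of_nonneg_left h2 h0).trans hX'
      · nlinarith
    calc X * β ^ 2 = (X * β) * β := by ring
      _ ≤ 336 / 10000 * (α * β) * β := by gcongr
      _ ≤ 336 / 10000 * (α * β) * ν := by gcongr
      _ = _ := by ring
  have k3 : s * (α * β) ≤ ν * α * β := by
    calc s * (α * β) ≤ ν * (α * β) := by gcongr
      _ = _ := by ring
  have k4 : 10000 * (ν * (3 * X) * β) ≤ 1008 * (ν * α * β) := by
    calc 10000 * (ν * (3 * X) * β) = 30000 * (X * ν) * β := by ring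
      _ ≤ 30000 * (336 / 10000 * (α * β)) * β := by gcongr
      _ ≤ 30000 * (336 / 10000 * (α * β)) * ν := by gcongr
      _ = _ := by ring
  have k5 : 10000 * (ν * α * (3 * X)) ≤ 1008 * (ν * α * β) := by
    calc 10000 * (ν * α * (3 * X)) = 30000 * (X * ν) * α := by ring
      _ ≤ 30000 * (336 / 10000 * (α * β)) * α := by gcongr
      _ ≤ 30000 * (336 / 10000 * (α * β)) * ν := by gcongr
      _ = _ := by ring
  have : 0 < ν * α * β := by positivity
  nlinarith

lemma small_num (α β ν X : ℝ) (hα : 0 < α) (hβ : 0 < β) (hν : 0 < ν) (h2 : β ≤ ν) (hX0 : 0 ≤ X)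
    (hX : X ≤ 336 * (α * β) / (ν * 10000)) : 6 * X ^ 2 < α ^ 2 := by
  have hX' : X ≤ 336 / 10000 * α := by
    refine hX.trans ?_
    rw [div_le_iff₀ (by positivity)]
    nlinarith [mul_le_mul_of_nonneg_left h2 hα.le]
  have : X ^ 2 ≤ (336 / 10000 * α) ^ 2 := by gcongr
  nlinarith [sq_pos_of_pos hα]

end Rud
end

open Finset
noncomputable section
namespace Rud
variable {K : Type*} [Field K] [DecidableEq K]
set_option linter.unusedSectionVars false
set_option linter.unusedDecidableInType false
open MvPolynomial

set_option maxHeartbeats 1000000 in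
theorem incid [Infinite K] {p : ℕ} [CharP K p] (s : ℕ) (N : ℝ) (hs : (s : ℝ) ^ 2 ≤ N) (hN : N ≤ (p : ℝ) ^ 2)
    (t : ℕ) : ∀ (A B : Finset (K × K × K)), #A + #B ≤ t → Dist A → Dist B → ShL s A B → ShM s A B →
      (#A : ℝ) ≤ N → (#B : ℝ) ≤ N →
      (II A B : ℝ) ≤ 10000 * (Real.sqrt N * Real.sqrt #A * Real.sqrt #B) := by
  induction t with
  | zero =>
    intro A B h _ _ _ _ _ _
    have : A = ∅ := by rw [← card_eq_zero]; omega
    rw [this, II_empty_left, Nat.cast_zero]; positivity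
  | succ t ih =>
    intro A B ht hA hB hL hM hAN hBN
    by_cases hA0 : #A = 0
    · rw [card_eq_zero] at hA0
      rw [hA0, II_empty_left, Nat.cast_zero]; positivity
    by_cases hB0 : #B = 0
    · rw [card_eq_zero] at hB0
      rw [hB0, II_empty_right, Nat.cast_zero]; positivity
    by_contra hcon
    push Not at hcon
    have a1 : (1 : ℝ) ≤ #A := by exact_mod_cast Nat.one_le_iff_ne_zero.2 hA0
    have b1 : (1 : ℝ) ≤ #B := by exact_mod_cast Nat.one_le_iff_ne_zero.2 hB0
    have N0 : 0 ≤ N := by linarith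
    obtain ⟨α, hα⟩ : ∃ α, α = Real.sqrt #A := ⟨_, rfl⟩
    obtain ⟨β, hβ⟩ : ∃ β, β = Real.sqrt #B := ⟨_, rfl⟩
    obtain ⟨ν, hν⟩ : ∃ ν, ν = Real.sqrt N := ⟨_, rfl⟩
    have α0 : 0 < α := by rw [hα]; exact Real.sqrt_pos.2 (by linarith)
    have β0 : 0 < β := by rw [hβ]; exact Real.sqrt_pos.2 (by linarith)
    have ν0 : 0 < ν := by rw [hν]; exact Real.sqrt_pos.2 (by linarith)
    have α2 : α ^ 2 = #A := by rw [hα]; exact Real.sq_sqrt (by linarith)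
    have β2 : β ^ 2 = #B := by rw [hβ]; exact Real.sq_sqrt (by linarith)
    have αν : α ≤ ν := by rw [hα, hν]; exact Real.sqrt_le_sqrt hAN
    have βν : β ≤ ν := by rw [hβ, hν]; exact Real.sqrt_le_sqrt hBN
    have sν : (s : ℝ) ≤ ν := by rw [hν]; exact Real.le_sqrt_of_sq_le hs
    have νp : ν ≤ p := by rw [hν, Real.sqrt_le_left (Nat.cast_nonneg _)]; exact hN
    rw [← hα, ← hβ, ← hν] at hcon
    have hbig : 10000 * ν < α * β := by
      by_contra h
      push Not at h
      have h1 : (II A B : ℝ) ≤ #A * #B := by exact_mod_cast II_le_mul A B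
      rw [← α2, ← β2] at h1
      have := mul_le_mul_of_nonneg_right h (mul_pos α0 β0).le
      nlinarith
    obtain ⟨n, n1, n2, n3, n4⟩ := numer α β ν α0 β0 ν0 αν βν hbig
    -- degrees
    have degA : ∀ l ∈ A, 2 * (10000 * (ν * β) / (4 * α)) < #(NbM B l) := by
      intro l hl
      have e := II_erase_left A B l hl
      have h1 := ih (A.erase l) B (by rw [card_erase_of_mem hl]; omega) (hA.mono (erase_subset _ _)) hB
        (hL.mono (erase_subset _ _) Subset.rfl) (hM.mono (erase_subset _ _) Subset.rfl)
        (le_trans (by exact_mod_cast card_le_card (erase_subset _ _)) hAN) hBN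
      rw [card_erase_of_mem hl, ← hβ, ← hν] at h1
      have h2 := sqrt_pred #A (by omega)
      rw [← hα] at h2
      have e' : (II A B : ℝ) = II (A.erase l) B + #(NbM B l) := by exact_mod_cast e
      have h3 : ν * Real.sqrt ((#A - 1 : ℕ) : ℝ) * β ≤ ν * (α - 1 / (2 * α)) * β := by
        gcongr; linarith
      have h4 : 2 * (10000 * (ν * β) / (4 * α)) = 10000 * (ν * (1 / (2 * α)) * β) := by
        field_simp; ring
      rw [h4]
      nlinarith
    have degB : ∀ l ∈ B, 2 * (10000 * (ν * α) / (4 * β)) < #(NbL A l) := by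
      intro l hl
      have e := II_erase_right A B l hl
      have h1 := ih A (B.erase l) (by rw [card_erase_of_mem hl]; omega) hA (hB.mono (erase_subset _ _))
        (hL.mono Subset.rfl (erase_subset _ _)) (hM.mono Subset.rfl (erase_subset _ _)) hAN
        (le_trans (by exact_mod_cast card_le_card (erase_subset _ _)) hBN)
      rw [card_erase_of_mem hl, ← hα, ← hν] at h1
      have h2 := sqrt_pred #B (by omega)
      rw [← hβ] at h2
      have e' : (II A B : ℝ) = II A (B.erase l) + #(NbL A l) := by exact_mod_cast e
      have h3 : ν * α * Real.sqrt ((#B - 1 : ℕ) : ℝ) ≤ ν * α * (β - 1 / (2 * β)) := by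
        gcongr; linarith
      have h4 : 2 * (10000 * (ν * α) / (4 * β)) = 10000 * (ν * α * (1 / (2 * β))) := by
        field_simp; ring
      rw [h4]
      nlinarith
    obtain ⟨S, hSA, hS1, hS2⟩ := greedy A B (3 * n) (10000 * (ν * β) / (4 * α))
    have hScard : 3 * #S ≤ n ^ 2 := by
      have := n4 #S (by rw [β2]; push_cast at hS1; exact hS1)
      exact_mod_cast this
    obtain ⟨f, f0, fd, fS⟩ := exists_poly S n hScard
    have vBS : ∀ j ∈ ({j ∈ B | 3 * n < #(NbL S j)} : Finset _), VM f j := by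
      intro j hj
      exact VM_of_nb f S (hA.mono hSA) fS j (lt_of_le_of_lt fd (mem_filter.1 hj).2)
    have vA : ∀ i ∈ A, VL f i := by
      intro i hi
      by_cases hiS : i ∈ S
      · exact fS i hiS
      · refine VL_of_nb f _ (hB.mono (filter_subset _ _)) vBS i (lt_of_le_of_lt fd ?_)
        have h1 := hS2 i hi hiS
        have h2 := degA i hi
        have : (3 * n : ℝ) < #(NbM {j ∈ B | 3 * n < #(NbL S j)} i) := by linarith
        exact_mod_cast this
    have vB : ∀ j ∈ B, VM f j := by
      intro j hj
      refine VM_of_nb f A hA vA j (lt_of_le_of_lt fd ?_)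
      have h2 := degB j hj
      have : (3 * n : ℝ) < #(NbL A j) := by
        have : (0:ℝ) ≤ n := Nat.cast_nonneg _
        linarith
      exact_mod_cast this
    have X0 : (0:ℝ) ≤ 3 * n + 1 := by positivity
    have hdp : f.totalDegree < p := by
      have h1 : (3 * n + 1 : ℝ) ≤ ν := by
        refine n3.trans ?_
        rw [div_le_iff₀ (by positivity)]
        nlinarith [mul_le_mul αν βν β0.le ν0.le, mul_pos ν0 ν0]
      have h2 : (3 * n + 1 : ℝ) ≤ p := h1.trans νp
      have : 3 * n + 1 ≤ p := by exact_mod_cast h2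
      omega
    obtain ⟨A', hA', B', hB', cA', cB', hI⟩ := gen s f f0 hdp A B hA hB hL hM vA vB
    have fdX : (f.totalDegree : ℝ) + 1 ≤ 3 * n + 1 := by
      have : (f.totalDegree : ℝ) ≤ 3 * n := by exact_mod_cast fd
      linarith
    have small : ∀ k : ℕ, k ≤ 6 * f.totalDegree ^ 2 → (k : ℝ) ≤ 6 * (3 * n + 1 : ℝ) ^ 2 := by
      intro k hk
      have h1 : (k : ℝ) ≤ 6 * (f.totalDegree : ℝ) ^ 2 := by exact_mod_cast hk
      have h2 : (f.totalDegree : ℝ) ^ 2 ≤ (3 * n + 1 : ℝ) ^ 2 := by gcongr; linarith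
      linarith
    have sq : ∀ k : ℕ, k ≤ 6 * f.totalDegree ^ 2 → Real.sqrt k ≤ 3 * (3 * n + 1 : ℝ) := by
      intro k hk
      rw [Real.sqrt_le_left (by positivity)]
      have := small k hk
      nlinarith [sq_nonneg (3 * n + 1 : ℝ)]
    have ltA : #A' < #A := by
      have h1 := small_num α β ν _ α0 β0 ν0 βν X0 n3
      have h2 := small _ cA'
      rw [α2] at h1
      have : (#A' : ℝ) < #A := by linarith
      exact_mod_cast this
    have ltB : #B' < #B := by
      have h1 := small_num β α ν _ β0 α0 ν0 αν X0 (by rw [mul_comm β α]; exact n3)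
      have h2 := small _ cB'
      rw [β2] at h1
      have : (#B' : ℝ) < #B := by linarith
      exact_mod_cast this
    have i2 := ih A' B (by omega) (hA.mono hA') hB
        (hL.mono hA' Subset.rfl) (hM.mono hA' Subset.rfl)
        (le_trans (by exact_mod_cast card_le_card hA') hAN) hBN
    have i3 := ih A B' (by omega) hA (hB.mono hB')
        (hL.mono Subset.rfl hB') (hM.mono Subset.rfl hB') hAN
        (le_trans (by exact_mod_cast card_le_card hB') hBN)
    rw [← hβ, ← hν] at i2
    rw [← hα, ← hν] at i3
    have tot : II A B ≤ II (A \ A') (B \ B') + II A' B + II A B' := by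
      have s1 : A ⊆ (A \ A') ∪ A' := by rw [sdiff_union_of_subset hA']
      have s2 : B ⊆ (B \ B') ∪ B' := by rw [sdiff_union_of_subset hB']
      have t1 := (II_mono s1 (Subset.refl B)).trans (II_union_left _ _ _)
      have t2 := (II_mono (Subset.refl (A \ A')) s2).trans (II_union_right _ _ _)
      have t3 := II_mono (sdiff_subset : A \ A' ⊆ A) (Subset.refl B')
      omega
    have tot' : (II A B : ℝ) ≤ II (A \ A') (B \ B') + II A' B + II A B' := by exact_mod_cast tot
    have fin := fin_num α β ν (3 * n + 1) (II (A \ A') (B \ B')) (II A' B) (II A B') s α0 β0 ν0 αν βν sν n3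
      (by
        refine hI.trans ?_
        rw [Real.sqrt_mul (by linarith), ← hα, ← hβ, α2, β2]
        have : ((f.totalDegree : ℝ) + 1) * (#A + #B) ≤ (3 * n + 1) * (#A + #B) := by gcongr
        linarith)
      (i2.trans (by gcongr; exact sq _ cA'))
      (i3.trans (by gcongr; exact sq _ cB'))
    linarith
end Rud
end

open Finset
noncomputable section
namespace Rud
open MvPolynomial
variable {F : Type*} [Field F] 

def aR (q : F × F × F) : MvPolynomial (Fin 4) F := C q.1 + X 0 * C q.2.2 + X 1
def bR (q : F × F × F) : MvPolynomial (Fin 4) F := C q.2.1 + X 2 * C q.2.2 + X 3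
def cR (q : F × F × F) : MvPolynomial (Fin 4) F := 1 + X 0 * C q.2.1 + X 2 * C q.1
def eR (q : F × F × F) : MvPolynomial (Fin 4) F := C q.2.2 + X 1 * C q.2.1 + X 3 * C q.1

lemma bR_ne (q : F × F × F) : bR q ≠ 0 := by
  intro h
  have := congrArg (eval ![0, 0, 0, 1 - q.2.1]) h
  simp [bR] at this
lemma eR_ne (q : F × F × F) (hq : q.2.1 ≠ 0) : eR q ≠ 0 := by
  intro h
  have := congrArg (eval ![0, (1 - q.2.2) / q.2.1, 0, 0]) h
  simp [eR, hq] at this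

lemma ab_inj (q r : F × F × F) (h : aR q * bR r = aR r * bR q) : q = r := by
  have e : ∀ s t s' t' : F, (q.1 + s * q.2.2 + t) * (r.2.1 + s' * r.2.2 + t')
      = (r.1 + s * r.2.2 + t) * (q.2.1 + s' * q.2.2 + t') := by
    intro s t s' t'
    have := congrArg (eval ![s, t, s', t']) h
    simpa [aR, bR] using this
  have h1 : q.1 = r.1 := by
    have := e 0 (-q.1) 0 (1 - q.2.1)
    linear_combination this
  have h2 : q.2.1 = r.2.1 := by
    have := e 0 (1 - q.1) 0 (-q.2.1)
    rw [← h1] at this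
    linear_combination -this
  have h3 : q.2.2 = r.2.2 := by
    have := e 1 0 0 (1 - q.2.1)
    rw [← h1, ← h2] at this
    linear_combination this
  exact Prod.ext h1 (Prod.ext h2 h3)
lemma ce_inj (q r : F × F × F) (h : cR q * eR r = cR r * eR q) : q = r := by
  have e : ∀ s t s' t' : F, (1 + s * q.2.1 + s' * q.1) * (r.2.2 + t * r.2.1 + t' * r.1)
      = (1 + s * r.2.1 + s' * r.1) * (q.2.2 + t * q.2.1 + t' * q.1) := by
    intro s t s' t'
    have := congrArg (eval ![s, t, s', t']) h
    simpa [cR, eR] using this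
  have h1 : q.2.2 = r.2.2 := by
    have := e 0 0 0 0
    linear_combination -this
  have h2 : q.2.1 = r.2.1 := by
    have := e 0 1 0 0
    rw [← h1] at this
    linear_combination -this
  have h3 : q.1 = r.1 := by
    have := e 0 0 0 1
    rw [← h1] at this
    linear_combination -this
  exact Prod.ext h3 (Prod.ext h2 h1)

abbrev KK (F : Type*) [Field F] := FractionRing (MvPolynomial (Fin 4) F)
abbrev ii : MvPolynomial (Fin 4) F →+* KK F := algebraMap _ _
lemma ii_inj : Function.Injective (ii (F := F)) := IsFractionRing.injective _ _
lemma ii_ne {a : MvPolynomial (Fin 4) F} (h : a ≠ 0) : ii a ≠ 0 := fun h0 => h (ii_inj (by rw [h0, map_zero]))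

def lineL (q : F × F × F) : KK F × KK F × KK F := (ii (aR q) / ii (bR q), ii (C q.2.2) / ii (bR q), - 1 / ii (bR q))
def lineM (q : F × F × F) : KK F × KK F × KK F := (ii (cR q) / ii (eR q), - ii (C q.2.1) / ii (eR q), ii (C q.1) / ii (eR q))

lemma lineL_inj (q r : F × F × F) (h : (lineL q).1 = (lineL r).1) : q = r := by
  simp only [lineL] at h
  rw [div_eq_div_iff (ii_ne (bR_ne q)) (ii_ne (bR_ne r)), ← map_mul, ← map_mul] at h
  exact ab_inj q r (ii_inj h)
lemma lineM_inj (q r : F × F × F) (hq : q.2.1 ≠ 0) (hr : r.2.1 ≠ 0) (h : (lineM q).1 = (lineM r).1) : q = r := by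
  simp only [lineM] at h
  rw [div_eq_div_iff (ii_ne (eR_ne q hq)) (ii_ne (eR_ne r hr)), ← map_mul, ← map_mul] at h
  exact ce_inj q r (ii_inj h)

lemma inc_iff (i j : F × F × F) (hj : j.2.1 ≠ 0) : Inc (lineL i) (lineM j) ↔ Inc i j := by
  have hb := ii_ne (bR_ne i)
  have he := ii_ne (eR_ne j hj)
  have key : bR i * C j.1 + C j.2.1 * aR i - eR j - C i.2.2 * cR j = C (j.1 * i.2.1 + j.2.1 * i.1 - j.2.2 - i.2.2) := by
    simp only [aR, bR, cR, eR, C_add, C_sub, C_mul]; ring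
  have key2 := congrArg ii key
  simp only [map_add, map_sub, map_mul] at key2
  have : Inc (lineL i) (lineM j) ↔ ii (C (j.1 * i.2.1 + j.2.1 * i.1 - j.2.2 - i.2.2)) = 0 := by
    simp only [map_add, map_sub, map_mul]
    rw [← key2]
    unfold Inc lineL lineM
    dsimp only
    field_simp
    constructor
    · intro h; linear_combination h
    · intro h; linear_combination h
  rw [this]
  unfold Inc
  rw [map_eq_zero_iff _ ii_inj, C_eq_zero]
  constructor
  · intro h; linear_combination -h
  · intro h; linear_combination -h

instance : Infinite (KK F) := Infinite.of_injective _ (ii_inj (F := F))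
instance {p : ℕ} [CharP F p] : CharP (KK F) p := charP_of_injective_ringHom (ii_inj (F := F)) p

theorem incidF {p : ℕ} [CharP F p] [DecidableEq F] (s : ℕ) (N : ℝ) (hs : (s : ℝ) ^ 2 ≤ N) (hN : N ≤ (p : ℝ) ^ 2)
    (A B : Finset (F × F × F)) (hB : ∀ j ∈ B, j.2.1 ≠ 0) (hL : ShL s A B) (hM : ShM s A B)
    (hAN : (#A : ℝ) ≤ N) (hBN : (#B : ℝ) ≤ N) :
    (II A B : ℝ) ≤ 10000 * (Real.sqrt N * Real.sqrt #A * Real.sqrt #B) := by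
  haveI : DecidableEq (KK F) := Classical.decEq _
  have injL : Set.InjOn (lineL (F := F)) A := fun q _ r _ h => lineL_inj q r (by rw [h])
  have injM : Set.InjOn (lineM (F := F)) B := fun q hq r hr h => lineM_inj q r (hB q hq) (hB r hr) (by rw [h])
  have cA := card_image_of_injOn injL
  have cB := card_image_of_injOn injM
  have hII : II A B ≤ II (A.image lineL) (B.image lineM) := by
    unfold II
    refine card_le_card_of_injOn (fun q => (lineL q.1, lineM q.2)) ?_ ?_
    · intro q hq
      simp only [coe_filter, mem_product, Set.mem_ofPred_eq] at hq ⊢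
      exact ⟨⟨mem_image_of_mem _ hq.1.1, mem_image_of_mem _ hq.1.2⟩, (inc_iff _ _ (hB _ hq.1.2)).2 hq.2⟩
    · intro q hq r hr h
      simp only [coe_filter, mem_product, Set.mem_ofPred_eq] at hq hr
      rw [Prod.mk.injEq] at h
      exact Prod.ext (injL hq.1.1 hr.1.1 h.1) (injM hq.1.2 hr.1.2 h.2)
  have := incid (K := KK F) (p := p) s N hs hN _ (A.image lineL) (B.image lineM) le_rfl
    (by
      intro q hq r hr h
      obtain ⟨q, hq', rfl⟩ := mem_image.1 hq
      obtain ⟨r, hr', rfl⟩ := mem_image.1 hr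
      rw [lineL_inj q r h])
    (by
      intro q hq r hr h
      obtain ⟨q, hq', rfl⟩ := mem_image.1 hq
      obtain ⟨r, hr', rfl⟩ := mem_image.1 hr
      rw [lineM_inj q r (hB q hq') (hB r hr') h])
    (by
      intro q hq r hr hne B' hB' h
      obtain ⟨q, hq', rfl⟩ := mem_image.1 hq
      obtain ⟨r, hr', rfl⟩ := mem_image.1 hr
      obtain ⟨B0, hB0, rfl⟩ := subset_image_iff.1 hB'
      refine card_image_le.trans (hL q hq' r hr' (fun h => hne (by rw [h])) B0 (by exact_mod_cast hB0) fun j hj => ?_)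
      have hj' : j.2.1 ≠ 0 := hB j (by exact_mod_cast hB0 hj)
      have := h _ (mem_image_of_mem _ hj)
      rwa [inc_iff _ _ hj', inc_iff _ _ hj'] at this)
    (by
      intro q hq r hr hne B' hB' h
      obtain ⟨q, hq', rfl⟩ := mem_image.1 hq
      obtain ⟨r, hr', rfl⟩ := mem_image.1 hr
      obtain ⟨B0, hB0, rfl⟩ := subset_image_iff.1 hB'
      refine card_image_le.trans (hM q hq' r hr' (fun h => hne (by rw [h])) B0 (by exact_mod_cast hB0) fun j hj => ?_)
      have := h _ (mem_image_of_mem _ hj)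
      rwa [inc_iff _ _ (hB q hq'), inc_iff _ _ (hB r hr')] at this)
    (by rw [cA]; exact hAN) (by rw [cB]; exact hBN)
  rw [cA, cB] at this
  exact le_trans (by exact_mod_cast hII) this
end Rud
end

open Finset
noncomputable section
namespace Rud
variable {p : ℕ} [Fact p.Prime]

def Grp (G : Finset (ZMod p)) : Prop :=
  1 ∈ G ∧ (∀ a ∈ G, a ≠ 0) ∧ (∀ a ∈ G, ∀ b ∈ G, a * b ∈ G) ∧ (∀ a ∈ G, a⁻¹ ∈ G)

def EnP (P : Finset (ZMod p)) : ℕ := ∑ t, (#{x ∈ P | t - x ∈ P}) ^ 2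

lemma shM_aux (G P : Finset (ZMod p)) (hGP : #G ≤ #P) : ShM (#P) (P ×ˢ G ×ˢ P) (P ×ˢ G ×ˢ P) := by
  rintro ⟨y, γ, w⟩ hj ⟨y', γ', w'⟩ hj' hne A' hA' h
  have hm : ∀ i ∈ A', i.1 ∈ P ∧ i.2.1 ∈ G ∧ i.2.2 ∈ P := fun i hi => by
    simpa only [mem_product] using hA' hi
  simp only [Inc] at h
  by_cases hy : y = y'
  · subst hy
    by_cases hg : γ = γ'
    · subst hg
      have : A' = ∅ := by
        rw [eq_empty_iff_forall_notMem]
        intro i hi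
        obtain ⟨h1, h2⟩ := h i hi
        apply hne
        have : w = w' := by linear_combination h1 - h2
        rw [this]
      simp [this]
    · refine le_trans (card_le_card_of_injOn (fun i => i.2.1) (fun i hi => (hm i hi).2.1) ?_) hGP
      intro i hi i' hi' e
      obtain ⟨h1, h2⟩ := h i hi
      obtain ⟨h3, h4⟩ := h i' hi'
      dsimp only at e
      have e1 : i.1 = i'.1 := by
        have : (γ - γ') * (i.1 - i'.1) = 0 := by linear_combination h2 - h1 - h4 + h3
        rcases mul_eq_zero.1 this with h | h
        · exact absurd (sub_eq_zero.1 h) hg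
        · exact sub_eq_zero.1 h
      have e2 : i.2.2 = i'.2.2 := by
        rw [e, e1] at h1
        linear_combination h1 - h3
      exact Prod.ext e1 (Prod.ext e e2)
  · refine card_le_card_of_injOn (fun i => i.1) (fun i hi => (hm i hi).1) ?_
    intro i hi i' hi' e
    obtain ⟨h1, h2⟩ := h i hi
    obtain ⟨h3, h4⟩ := h i' hi'
    dsimp only at e
    have e1 : i.2.1 = i'.2.1 := by
      have : (y - y') * (i.2.1 - i'.2.1) = 0 := by
        rw [e] at h1 h2
        linear_combination h2 - h1 - h4 + h3
      rcases mul_eq_zero.1 this with h | h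
      · exact absurd (sub_eq_zero.1 h) hy
      · exact sub_eq_zero.1 h
    have e2 : i.2.2 = i'.2.2 := by
      rw [e, e1] at h1
      linear_combination h1 - h3
    exact Prod.ext e (Prod.ext e1 e2)

lemma shL_aux (G P : Finset (ZMod p)) (hGP : #G ≤ #P) : ShL (#P) (P ×ˢ G ×ˢ P) (P ×ˢ G ×ˢ P) := by
  intro i hi i' hi' hne B' hB' h
  have := shM_aux G P hGP (i) hi i' hi' hne B' hB' (fun j hj => by
    obtain ⟨h1, h2⟩ := h j hj
    simp only [Inc] at h1 h2 ⊢
    exact ⟨by linear_combination h1, by linear_combination h2⟩)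
  exact this

lemma II_lower (G P : Finset (ZMod p)) (hG : Grp G) (hP : ∀ g ∈ G, ∀ x ∈ P, g * x ∈ P) :
    (#G) ^ 2 * EnP P ≤ II (P ×ˢ G ×ˢ P) (P ×ˢ G ×ˢ P) := by
  obtain ⟨h1, h0, hmul, hinv⟩ := hG
  have e : (#G) ^ 2 * EnP P = #((G ×ˢ G) ×ˢ (univ.sigma fun t : ZMod p => {x ∈ P | t - x ∈ P} ×ˢ {x ∈ P | t - x ∈ P})) := by
    rw [card_product, card_product, card_sigma, EnP]
    simp only [card_product, sq]
  rw [e]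
  unfold II
  refine card_le_card_of_injOn (fun q => ((q.1.1⁻¹ * q.2.2.1, q.1.2, q.2.2.2), (q.1.2⁻¹ * (q.2.1 - q.2.2.1), q.1.1, q.2.1 - q.2.2.2))) ?_ ?_
  · rintro ⟨⟨γ, δ⟩, ⟨t, x, z⟩⟩ hq
    simp only [coe_product, Set.mem_prod, mem_coe, mem_sigma, mem_univ, true_and, mem_product, mem_filter] at hq
    obtain ⟨⟨hγ, hδ⟩, ⟨hx, hx'⟩, hz, hz'⟩ := hq
    have g0 := h0 _ hγ
    have d0 := h0 _ hδ
    rw [mem_coe, mem_filter]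
    simp only [mem_product]
    refine ⟨⟨⟨hP _ (hinv _ hγ) _ hx, hδ, hz⟩, hP _ (hinv _ hδ) _ hx', hγ, hz'⟩, ?_⟩
    unfold Inc
    dsimp only
    rw [mul_inv_cancel_left₀ d0, mul_inv_cancel_left₀ g0]
    ring
  · rintro ⟨⟨γ, δ⟩, ⟨t, x, z⟩⟩ hq ⟨⟨γ', δ'⟩, ⟨t', x', z'⟩⟩ hq' h
    simp only [coe_product, Set.mem_prod, mem_coe] at hq
    have g0 := inv_ne_zero (h0 _ hq.1.1)
    simp only [Prod.mk.injEq] at h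
    obtain ⟨⟨a1, rfl, rfl⟩, a4, rfl, a6⟩ := h
    have : t = t' := by linear_combination a6
    subst this
    have := mul_left_cancel₀ g0 a1
    subst this
    rfl

theorem energyP (G P : Finset (ZMod p)) (hG : Grp G) (hP : ∀ g ∈ G, ∀ x ∈ P, g * x ∈ P)
    (hGP : #G ≤ #P) (hPp : (#P : ℝ) ^ 2 * #G ≤ (p : ℝ) ^ 2) :
    (EnP P : ℝ) * Real.sqrt #G ≤ 10000 * (#P : ℝ) ^ 3 := by
  have g1 : (1 : ℝ) ≤ #G := by exact_mod_cast card_pos.2 ⟨1, hG.1⟩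
  have hc : (#(P ×ˢ G ×ˢ P) : ℝ) = (#P : ℝ) ^ 2 * #G := by
    rw [card_product, card_product]; push_cast; ring
  have h := incidF (p := p) (#P) ((#P : ℝ) ^ 2 * #G) (by nlinarith [sq_nonneg (#P : ℝ)]) hPp
    (P ×ˢ G ×ˢ P) (P ×ˢ G ×ˢ P) (fun j hj => by
      simp only [mem_product] at hj
      exact hG.2.1 _ hj.2.1) (shL_aux G P hGP) (shM_aux G P hGP) hc.le hc.le
  rw [hc] at h
  have h2 : ((#G : ℝ)) ^ 2 * EnP P ≤ II (P ×ˢ G ×ˢ P) (P ×ˢ G ×ˢ P) := by exact_mod_cast II_lower G P hG hP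
  have h3 := h2.trans h
  have e : Real.sqrt ((#P : ℝ) ^ 2 * #G) = #P * Real.sqrt #G := by
    rw [Real.sqrt_mul (by positivity), Real.sqrt_sq (by positivity)]
  rw [e] at h3
  set q := Real.sqrt (#G : ℝ) with hq
  have q1 : 1 ≤ q := by rw [hq]; exact Real.one_le_sqrt.2 g1
  have hqq : (#G : ℝ) = q ^ 2 := by rw [hq, Real.sq_sqrt (by positivity)]
  rw [hqq] at h3
  have : q ^ 3 * ((EnP P : ℝ) * q) ≤ q ^ 3 * (10000 * (#P : ℝ) ^ 3) := by
    calc _ = (q^2)^2 * (EnP P : ℝ) := by ring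
      _ ≤ _ := h3
      _ = _ := by ring
  exact le_of_mul_le_mul_left this (pow_pos (by linarith) 3)
end Rud
end

open Finset
noncomputable section
namespace Rud
variable {p : ℕ} [Fact p.Prime]

def cv (f g : ZMod p → ℝ) (t : ZMod p) : ℝ := ∑ x, f x * g (t - x)
def En (f : ZMod p → ℝ) : ℝ := ∑ t, (cv f f t) ^ 2

lemma sum_addr (F : ZMod p → ℝ) (c : ZMod p) : ∑ x, F (x + c) = ∑ x, F x :=
  Fintype.sum_equiv (Equiv.addRight c) _ _ (fun _ => rfl)
lemma sum_addl (F : ZMod p → ℝ) (c : ZMod p) : ∑ x, F (c + x) = ∑ x, F x :=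
  Fintype.sum_equiv (Equiv.addLeft c) _ _ (fun _ => rfl)
lemma sum_subr (F : ZMod p → ℝ) (c : ZMod p) : ∑ x, F (x - c) = ∑ x, F x :=
  Fintype.sum_equiv (Equiv.subRight c) _ _ (fun _ => rfl)
lemma sum_subl (F : ZMod p → ℝ) (c : ZMod p) : ∑ x, F (c - x) = ∑ x, F x :=
  Fintype.sum_equiv (Equiv.subLeft c) _ _ (fun _ => rfl)
lemma sum_mull (F : ZMod p → ℝ) (c : ZMod p) (hc : c ≠ 0) : ∑ x, F (c * x) = ∑ x, F x :=
  Fintype.sum_equiv (Equiv.mulLeft₀ c hc) _ _ (fun _ => rfl)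

lemma sum_cv (f g : ZMod p → ℝ) : ∑ t, cv f g t = (∑ x, f x) * ∑ x, g x := by
  unfold cv
  rw [sum_comm, sum_mul]
  refine sum_congr rfl fun x _ => ?_
  rw [← mul_sum, sum_subr]

lemma cv_mixed (f g : ZMod p → ℝ) :
    ∑ t, (cv f g t) ^ 2 = ∑ d, (∑ x, f x * f (x + d)) * (∑ y, g y * g (y + d)) := by
  have h1 : ∀ t, (cv f g t) ^ 2 = ∑ x, ∑ d, (f x * f (x + d)) * (g (t - x) * g (t - (x + d))) := by
    intro t
    rw [sq]
    unfold cv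
    rw [sum_mul_sum]
    refine sum_congr rfl fun x _ => ?_
    rw [← sum_addl _ x]
    refine sum_congr rfl fun d _ => ?_
    ring
  simp only [h1]
  rw [sum_comm]
  have h2 : ∀ x, ∑ t, ∑ d, (f x * f (x + d)) * (g (t - x) * g (t - (x + d)))
      = ∑ d, (f x * f (x + d)) * ∑ y, g y * g (y + d) := by
    intro x
    rw [sum_comm]
    refine sum_congr rfl fun d _ => ?_
    rw [← mul_sum]
    congr 1
    rw [← sum_addr _ (x + d)]
    refine sum_congr rfl fun y _ => ?_
    rw [show y + (x + d) - x = y + d by ring, show y + (x + d) - (x + d) = y by ring]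
    ring
  simp only [h2]
  rw [sum_comm]
  refine sum_congr rfl fun d _ => ?_
  rw [sum_mul]

lemma cv_mixed_le (f g : ZMod p → ℝ) : ∑ t, (cv f g t) ^ 2 ≤ (En f + En g) / 2 := by
  unfold En
  rw [cv_mixed, cv_mixed f f, cv_mixed g g, ← sum_add_distrib, sum_div]
  refine sum_le_sum fun d _ => ?_
  nlinarith [sq_nonneg ((∑ x, f x * f (x + d)) - (∑ y, g y * g (y + d)))]

lemma En_sum_le {ι : Type*} (I : Finset ι) (f : ι → ZMod p → ℝ) (B : ℝ) (hB : ∀ i ∈ I, En (f i) ≤ B) :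
    En (fun x => ∑ i ∈ I, f i x) ≤ (#I : ℝ) ^ 4 * B := by
  have h1 : ∀ t, cv (fun x => ∑ i ∈ I, f i x) (fun x => ∑ i ∈ I, f i x) t = ∑ q ∈ I ×ˢ I, cv (f q.1) (f q.2) t := by
    intro t
    unfold cv
    rw [sum_comm]
    refine sum_congr rfl fun x _ => ?_
    rw [sum_mul_sum, sum_product]
  unfold En
  simp only [h1]
  calc ∑ t, (∑ q ∈ I ×ˢ I, cv (f q.1) (f q.2) t) ^ 2
      ≤ ∑ t, (#(I ×ˢ I) : ℝ) * ∑ q ∈ I ×ˢ I, (cv (f q.1) (f q.2) t) ^ 2 :=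
        sum_le_sum fun t _ => sq_sum_le_card_mul_sum_sq
    _ = (#(I ×ˢ I) : ℝ) * ∑ q ∈ I ×ˢ I, ∑ t, (cv (f q.1) (f q.2) t) ^ 2 := by
        rw [← mul_sum, sum_comm]
    _ ≤ (#(I ×ˢ I) : ℝ) * ∑ q ∈ I ×ˢ I, B := by
        gcongr with q hq
        rw [mem_product] at hq
        have := cv_mixed_le (f q.1) (f q.2)
        linarith [hB _ hq.1, hB _ hq.2]
    _ = _ := by
        rw [sum_const, nsmul_eq_mul, card_product]; push_cast; ring

lemma cv_mono {f f' g g' : ZMod p → ℝ} (hf : ∀ x, 0 ≤ f x) (hg : ∀ x, 0 ≤ g x) (h : ∀ x, f x ≤ f' x) (h' : ∀ x, g x ≤ g' x) (t : ZMod p) :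
    cv f g t ≤ cv f' g' t :=
  sum_le_sum fun x _ => mul_le_mul (h x) (h' _) (hg _) ((hf x).trans (h x))
lemma cv_nonneg {f g : ZMod p → ℝ} (hf : ∀ x, 0 ≤ f x) (hg : ∀ x, 0 ≤ g x) (t : ZMod p) : 0 ≤ cv f g t :=
  sum_nonneg fun x _ => mul_nonneg (hf x) (hg _)
lemma En_mono {f g : ZMod p → ℝ} (hf : ∀ x, 0 ≤ f x) (h : ∀ x, f x ≤ g x) : En f ≤ En g := by
  unfold En
  refine sum_le_sum fun t _ => ?_
  have := cv_mono hf hf h h t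
  have := cv_nonneg hf hf t
  gcongr

lemma En_ind (P : Finset (ZMod p)) (c : ℝ) : En (fun x => if x ∈ P then c else 0) = c ^ 4 * EnP P := by
  unfold En EnP
  push_cast
  rw [mul_sum]
  refine sum_congr rfl fun t _ => ?_
  have : cv (fun x => if x ∈ P then c else 0) (fun x => if x ∈ P then c else 0) t = c ^ 2 * (#{x ∈ P | t - x ∈ P} : ℝ) := by
    unfold cv
    have h : ∀ x, (if x ∈ P then c else 0) * (if t - x ∈ P then c else 0) = if (x ∈ P ∧ t - x ∈ P) then c ^ 2 else 0 := by
      intro x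
      by_cases h1 : x ∈ P <;> by_cases h2 : t - x ∈ P <;> simp [h1, h2, sq]
    simp only [h]
    rw [← sum_filter, sum_const, nsmul_eq_mul, mul_comm]
    congr 3
    ext x
    simp
  rw [this]; ring

lemma L2bound (G : Finset (ZMod p)) (hG : Grp G) (f : ZMod p → ℝ) (hf : ∀ g ∈ G, ∀ x, f (g * x) = f x)
    (h0 : ∑ x, f x = 0) : (#G : ℝ) * En f ≤ p * (∑ x, f x ^ 2) ^ 2 := by
  set H : ZMod p → ZMod p → ℝ := fun s b => ∑ y, f y * f (b - s * y) with hH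
  have h1 : ∀ s ∈ G, ∀ b, H s b = cv f f b := by
    intro s hs b
    simp only [hH, cv]
    rw [← sum_mull (fun y => f y * f (b - y)) s (hG.2.1 s hs)]
    refine sum_congr rfl fun y _ => ?_
    rw [hf s hs]
  have h2 : (#G : ℝ) * En f = ∑ s ∈ G, ∑ b, (H s b) ^ 2 := by
    rw [sum_congr rfl (fun s hs => sum_congr rfl fun b _ => by rw [h1 s hs b])]
    rw [sum_const, nsmul_eq_mul, En]
  have h3 : ∑ s ∈ G, ∑ b, (H s b) ^ 2 ≤ ∑ s, ∑ b, (H s b) ^ 2 :=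
    sum_le_sum_of_subset_of_nonneg (subset_univ _) fun s _ _ => sum_nonneg fun b _ => sq_nonneg _
  rw [h2]
  refine h3.trans (le_of_eq ?_)
  have h4 : ∀ s b, (H s b) ^ 2 = ∑ y, ∑ y', f y * f y' * (f (b - s * y) * f (b - s * y')) := by
    intro s b
    rw [sq]
    simp only [hH]
    rw [sum_mul_sum]
    refine sum_congr rfl fun y _ => sum_congr rfl fun y' _ => ?_
    ring
  have h5 : ∀ y y', ∑ s, ∑ b, f (b - s * y) * f (b - s * y') = if y = y' then p * ∑ x, f x ^ 2 else 0 := by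
    intro y y'
    split_ifs with h
    · subst h
      have : ∀ s : ZMod p, ∑ b, f (b - s * y) * f (b - s * y) = ∑ x, f x ^ 2 := by
        intro s
        rw [← sum_subr (fun x => f x ^ 2) (s * y)]
        exact sum_congr rfl fun b _ => (sq _).symm
      simp only [this]
      rw [sum_const, nsmul_eq_mul, card_univ, ZMod.card]
    · have e : ∀ s : ZMod p, ∑ b, f (b - s * y) * f (b - s * y') = ∑ b, f b * f (b + (y - y') * s) := by
        intro s
        rw [← sum_addr _ (s * y)]
        refine sum_congr rfl fun b _ => ?_
        congr 2 <;> ring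
      simp only [e]
      rw [sum_comm]
      refine sum_eq_zero fun b _ => ?_
      rw [← mul_sum]
      rw [sum_mull (fun u => f (b + u)) (y - y') (sub_ne_zero.2 h), sum_addl, h0, mul_zero]
  calc ∑ s, ∑ b, (H s b) ^ 2 = ∑ y, ∑ y', f y * f y' * ∑ s, ∑ b, f (b - s * y) * f (b - s * y') := by
        simp only [h4, mul_sum]
        rw [sum_congr rfl fun s _ => sum_comm]
        rw [sum_comm]
        refine sum_congr rfl fun y _ => ?_
        rw [sum_congr rfl fun s _ => sum_comm]
        rw [sum_comm]
    _ = _ := by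
        simp only [h5]
        simp only [mul_ite, mul_zero, sum_ite_eq, mem_univ, if_true]
        rw [← sum_mul]
        have : ∑ x, f x * f x = ∑ x, f x ^ 2 := sum_congr rfl fun x _ => (sq _).symm
        rw [this]
        ring

lemma En_inv (G : Finset (ZMod p)) (hG : Grp G) (f : ZMod p → ℝ) (hf : ∀ g ∈ G, ∀ x, f (g * x) = f x) :
    0 ≤ En f - (∑ x, f x) ^ 4 / p ∧
    0 ≤ (∑ x, f x ^ 2) - (∑ x, f x) ^ 2 / p ∧
    (#G : ℝ) * (En f - (∑ x, f x) ^ 4 / p) ≤ p * ((∑ x, f x ^ 2) - (∑ x, f x) ^ 2 / p) ^ 2 := by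
  have hp : (p : ℝ) ≠ 0 := by exact_mod_cast (Fact.out : p.Prime).ne_zero
  set c : ℝ := (∑ x, f x) / p with hc
  set S : ℝ := ∑ x, f x with hS
  set h : ZMod p → ℝ := fun x => f x - c with hh
  have sc : ∀ a : ℝ, ∑ _x : ZMod p, a = p * a := fun a => by
    rw [sum_const, nsmul_eq_mul, card_univ, ZMod.card]
  have s0 : ∑ x, h x = 0 := by
    simp only [hh]; rw [sum_sub_distrib, sc, ← hS, hc]; field_simp; ring
  have s2 : ∑ x, h x ^ 2 = (∑ x, f x ^ 2) - S ^ 2 / p := by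
    have : ∀ x, h x ^ 2 = f x ^ 2 - 2 * c * f x + c ^ 2 := fun x => by simp only [hh]; ring
    simp only [this]
    rw [sum_add_distrib, sum_sub_distrib, sc, ← mul_sum, ← hS, hc]
    field_simp; ring
  have cvf : ∀ t, cv f f t = cv h h t + S ^ 2 / p := by
    intro t
    have : ∀ x, f x * f (t - x) = h x * h (t - x) + c * h x + c * h (t - x) + c ^ 2 := fun x => by simp only [hh]; ring
    unfold cv
    simp only [this]
    rw [sum_add_distrib, sum_add_distrib, sum_add_distrib, sc, ← mul_sum, ← mul_sum, sum_subl, s0, hc]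
    field_simp; ring
  have e : En f - S ^ 4 / p = En h := by
    unfold En
    have : ∀ t, cv f f t ^ 2 = cv h h t ^ 2 + 2 * (S ^ 2 / p) * cv h h t + (S ^ 2 / p) ^ 2 := fun t => by rw [cvf]; ring
    simp only [this]
    rw [sum_add_distrib, sum_add_distrib, sc, ← mul_sum, sum_cv, s0]
    field_simp; ring
  rw [e, ← s2]
  refine ⟨sum_nonneg fun _ _ => sq_nonneg _, sum_nonneg fun _ _ => sq_nonneg _, L2bound G hG h (fun g hg x => ?_) s0⟩
  simp only [hh, hf g hg x]
end Rud
end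

open Finset
noncomputable section
namespace Rud
variable {p : ℕ} [Fact p.Prime]

/-- Energy of a dyadic level. -/
lemma level_bound (G : Finset (ZMod p)) (hG : Grp G) (r : ZMod p → ℝ) (hr0 : ∀ x, 0 ≤ r x)
    (hr : ∀ g ∈ G, ∀ x, r (g * x) = r x) (M : ℝ) (hM : ∑ x, r x = M)
    (hmax : ∀ x, r x * #G ≤ M) (D : ℝ) (hD0 : 0 < D) (hD : M * Real.sqrt #G ≤ D * p) :
    En (fun x => if D ≤ r x ∧ r x < 2 * D then r x else 0) * Real.sqrt #G ≤ 160000 * M ^ 2 * ∑ x, r x ^ 2 := by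
  classical
  obtain ⟨P, memP⟩ : ∃ P : Finset (ZMod p), ∀ x, x ∈ P ↔ (D ≤ r x ∧ r x < 2 * D) :=
    ⟨univ.filter fun x => D ≤ r x ∧ r x < 2 * D, fun x => by simp⟩
  obtain ⟨n, hn⟩ : ∃ n : ℝ, (#P : ℝ) = n := ⟨_, rfl⟩
  have n0 : 0 ≤ n := by rw [← hn]; exact Nat.cast_nonneg _
  obtain ⟨q, hq⟩ : ∃ q, Real.sqrt (#G : ℝ) = q := ⟨_, rfl⟩
  rw [hq] at hD ⊢
  have g1 : (1 : ℝ) ≤ #G := by exact_mod_cast card_pos.2 ⟨1, hG.1⟩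
  have q1 : 1 ≤ q := by rw [← hq]; exact Real.one_le_sqrt.2 g1
  have hqq : (#G : ℝ) = q ^ 2 := by rw [← hq, Real.sq_sqrt (by linarith)]
  have hp : (0 : ℝ) < p := by exact_mod_cast (Fact.out : p.Prime).pos
  set T := ∑ x, r x ^ 2 with hT
  have T0 : 0 ≤ T := sum_nonneg fun _ _ => sq_nonneg _
  have b1 : n * D ≤ M := by
    rw [← hM, ← hn, ← nsmul_eq_mul, ← sum_const]
    exact (sum_le_sum fun x hx => ((memP x).1 hx).1).trans
      (sum_le_sum_of_subset_of_nonneg (subset_univ _) fun x _ _ => hr0 x)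
  have b2 : n * D ^ 2 ≤ T := by
    rw [hT, ← hn, ← nsmul_eq_mul, ← sum_const]
    exact (sum_le_sum fun x hx => pow_le_pow_left₀ hD0.le ((memP x).1 hx).1 2).trans
      (sum_le_sum_of_subset_of_nonneg (subset_univ _) fun x _ _ => sq_nonneg _)
  have M0 : 0 ≤ M := le_trans (by positivity) b1
  have c1 : En (fun x => if D ≤ r x ∧ r x < 2 * D then r x else 0) ≤ (2 * D) ^ 4 * EnP P := by
    rw [← En_ind]
    refine En_mono (fun x => ?_) (fun x => ?_)
    · split_ifs
      · exact hr0 x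
      · exact le_rfl
    · simp only [memP]
      split_ifs with h
      · exact h.2.le
      · exact le_rfl
  have inv : ∀ g ∈ G, ∀ x ∈ P, g * x ∈ P := by
    intro g hg x hx
    rw [memP] at hx ⊢
    rwa [hr g hg]
  by_cases hz : ∃ x ∈ P, x ≠ 0
  · obtain ⟨x, hx, hx0⟩ := hz
    have hGP : #G ≤ #P := card_le_card_of_injOn (fun g => g * x) (fun g hg => inv g hg x hx)
      (fun a _ b _ h => mul_right_cancel₀ hx0 h)
    have hPp : (#P : ℝ) ^ 2 * #G ≤ (p : ℝ) ^ 2 := by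
      rw [hn]
      have : n * q ≤ p := by
        have : D * (n * q) ≤ D * p := by nlinarith
        exact le_of_mul_le_mul_left this hD0
      rw [hqq, ← mul_pow]
      exact pow_le_pow_left₀ (by positivity) this 2
    have h := energyP G P hG inv hGP hPp
    rw [hn, hq] at h
    calc _ ≤ (2 * D) ^ 4 * EnP P * q := by gcongr
      _ = (2 * D) ^ 4 * (EnP P * q) := by ring
      _ ≤ (2 * D) ^ 4 * (10000 * n ^ 3) := by gcongr
      _ = 160000 * (n * D) ^ 2 * (n * D ^ 2) := by ring
      _ ≤ _ := by gcongr
  · push Not at hz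
    by_cases h0 : (0 : ZMod p) ∈ P
    · have hP : P = {0} := by
        ext x
        rw [mem_singleton]
        exact ⟨fun h => hz x h, fun h => h ▸ h0⟩
      have e1 : (EnP P : ℝ) = 1 := by
        have := En_ind P 1
        rw [one_pow, one_mul] at this
        rw [← this, hP]
        have h : ∀ t : ZMod p, cv (fun x => if x ∈ ({0} : Finset (ZMod p)) then (1:ℝ) else 0) (fun x => if x ∈ ({0} : Finset (ZMod p)) then (1:ℝ) else 0) t = if t = 0 then 1 else 0 := by
          intro t
          unfold cv
          simp only [mem_singleton, ite_mul, one_mul, zero_mul]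
          simp
        unfold En
        simp only [h]
        simp
      have hc : n = 1 := by rw [← hn, hP]; simp
      rw [hc, one_mul] at b2
      have b3 : D * q ≤ M := by
        have h1 := hmax 0
        have h2 := ((memP 0).1 h0).1
        rw [hqq] at h1
        calc D * q ≤ D * q ^ 2 := by gcongr; nlinarith
          _ ≤ r 0 * q ^ 2 := by gcongr
          _ ≤ M := h1
      rw [e1, mul_one] at c1
      calc _ ≤ (2 * D) ^ 4 * q := by gcongr
        _ ≤ (2 * D) ^ 4 * q ^ 2 := by gcongr; nlinarith
        _ = 16 * (D * q) ^ 2 * D ^ 2 := by ring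
        _ ≤ 160000 * M ^ 2 * T := by gcongr; norm_num
    · have hP : P = ∅ := by
        rw [eq_empty_iff_forall_notMem]
        intro x hx
        exact h0 (hz x hx ▸ hx)
      have : (EnP P : ℝ) = 0 := by rw [hP]; simp [EnP]
      rw [this, mul_zero] at c1
      have : En (fun x => if D ≤ r x ∧ r x < 2 * D then r x else 0) * q ≤ 0 := mul_nonpos_of_nonpos_of_nonneg c1 (by linarith)
      exact this.trans (by positivity)

set_option maxHeartbeats 1000000 in
theorem step (hp2 : 2 < p) (G : Finset (ZMod p)) (hG : Grp G) (r : ZMod p → ℝ) (hr0 : ∀ x, 0 ≤ r x)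
    (hr : ∀ g ∈ G, ∀ x, r (g * x) = r x) (M : ℝ) (hM0 : 0 < M) (hM : ∑ x, r x = M)
    (hmax : ∀ x, r x * #G ≤ M) :
    (En r - M ^ 4 / p) * Real.sqrt #G ≤ 25920000 * (Real.logb 2 p) ^ 4 * M ^ 2 * ((∑ x, r x ^ 2) - M ^ 2 / p) := by
  have hp : (0 : ℝ) < p := by exact_mod_cast (Fact.out : p.Prime).pos
  have g1 : (1 : ℝ) ≤ #G := by exact_mod_cast card_pos.2 ⟨1, hG.1⟩
  obtain ⟨i1, i2, i3⟩ := En_inv G hG r hr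
  rw [hM] at i1 i2 i3
  obtain ⟨q, hq⟩ : ∃ q, Real.sqrt (#G : ℝ) = q := ⟨_, rfl⟩
  rw [hq]
  have q1 : 1 ≤ q := by rw [← hq]; exact Real.one_le_sqrt.2 g1
  have q0 : 0 < q := by linarith
  have hqq : (#G : ℝ) = q ^ 2 := by rw [← hq, Real.sq_sqrt (by linarith)]
  set T := ∑ x, r x ^ 2 with hT
  set e := T - M ^ 2 / p with he
  set l := Real.logb 2 p with hl
  have l1 : 1 ≤ l := by
    rw [hl, Real.le_logb_iff_rpow_le (by norm_num) hp, Real.rpow_one]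
    exact_mod_cast hp2.le
  by_cases hcase : e * p ≤ M ^ 2 * q
  · have h1 : q * ((En r - M ^ 4 / p) * q) ≤ q * (M ^ 2 * e) := by
      calc _ = (#G : ℝ) * (En r - M ^ 4 / p) := by rw [hqq]; ring
        _ ≤ p * e ^ 2 := i3
        _ = (e * p) * e := by ring
        _ ≤ (M ^ 2 * q) * e := by gcongr
        _ = _ := by ring
    refine (le_of_mul_le_mul_left h1 q0).trans ?_
    rw [mul_assoc]
    have : 1 ≤ l ^ 4 := one_le_pow₀ l1
    nlinarith [mul_nonneg (sq_nonneg M) i2]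
  · push Not at hcase
    set D := M * q / p with hD
    have D0 : 0 < D := by positivity
    have Dp : D * p = M * q := by rw [hD]; field_simp
    have Te : T ≤ 2 * e := by
      have : M ^ 2 / p ≤ e := by
        rw [div_le_iff₀ hp]
        nlinarith [sq_nonneg M]
      linarith
    set L := Nat.log 2 p + 1 with hL
    set f : ℕ → ZMod p → ℝ := fun i x =>
      if i = 0 then (if r x < D then r x else 0)
      else (if D * 2 ^ (i - 1) ≤ r x ∧ r x < 2 * (D * 2 ^ (i - 1)) then r x else 0) with hf
    have f0 : ∀ i x, 0 ≤ f i x := by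
      intro i x
      simp only [hf]
      split_ifs <;> first | exact hr0 x | exact le_rfl
    have cover : ∀ x, r x ≤ ∑ i ∈ range (L + 1), f i x := by
      intro x
      suffices h : ∃ i ∈ range (L + 1), r x ≤ f i x by
        obtain ⟨i, hi, h⟩ := h
        exact h.trans (single_le_sum (f := fun i => f i x) (fun j _ => f0 j x) hi)
      by_cases hx : r x < D
      · exact ⟨0, by simp, by simp [hf, hx]⟩
      · push Not at hx
        have h1 : 1 ≤ r x / D := by rw [le_div_iff₀ D0]; linarith
        obtain ⟨n, hn1, hn2⟩ := exists_nat_pow_near h1 (one_lt_two)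
        rw [le_div_iff₀ D0] at hn1
        rw [div_lt_iff₀ D0] at hn2
        refine ⟨n + 1, ?_, ?_⟩
        · rw [mem_range, hL]
          have : 2 ^ n ≤ p := by
            have h2 : (2 : ℝ) ^ n * D * q ^ 2 ≤ M := by
              rw [← hqq]
              exact (mul_le_mul_of_nonneg_right hn1 (by linarith)).trans (hmax x)
            have h3 : (2 : ℝ) ^ n * (M * q) ≤ M * p := by
              calc _ = (2 : ℝ) ^ n * D * p := by rw [mul_assoc, Dp]
                _ ≤ (2 : ℝ) ^ n * D * q ^ 2 * p := by
                  have : 1 ≤ q ^ 2 := one_le_pow₀ q1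
                  have : 0 ≤ (2 : ℝ) ^ n * D * p := by positivity
                  nlinarith
                _ ≤ M * p := by gcongr
            have h4 : (2 : ℝ) ^ n * M ≤ p * M := by
              calc _ ≤ (2 : ℝ) ^ n * (M * q) := by
                    gcongr; nlinarith
                _ ≤ _ := h3
                _ = _ := by ring
            have := le_of_mul_le_mul_right h4 hM0
            exact_mod_cast this
          have := Nat.le_log_of_pow_le one_lt_two this
          omega
        · have c : D * 2 ^ n ≤ r x ∧ r x < 2 * (D * 2 ^ n) := ⟨by linarith, by rw [pow_succ] at hn2; linarith⟩
          simp [hf, c]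
    have bnd : ∀ i ∈ range (L + 1), En (f i) ≤ 320000 * M ^ 2 * e / q := by
      intro i _
      rw [le_div_iff₀ q0]
      rcases Nat.eq_zero_or_pos i with rfl | hi
      · obtain ⟨_, j2, j3⟩ := En_inv G hG (f 0) (fun g hg x => by simp [hf, hr g hg])
        have s1 : ∑ x, f 0 x ≤ M := by
          rw [← hM]
          refine sum_le_sum fun x _ => ?_
          simp only [hf, if_true]
          split_ifs
          · exact le_rfl
          · exact hr0 x
        have s2 : ∑ x, f 0 x ^ 2 ≤ D * M := by
          rw [← hM, mul_sum]
          refine sum_le_sum fun x _ => ?_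
          simp only [hf, if_true]
          split_ifs with h
          · nlinarith [hr0 x]
          · rw [zero_pow two_ne_zero]; exact mul_nonneg D0.le (hr0 x)
        have s0 : 0 ≤ ∑ x, f 0 x := sum_nonneg fun x _ => f0 0 x
        have a1 : (∑ x, f 0 x) ^ 4 / p ≤ M ^ 4 / p := by gcongr
        have a2 : p * ((∑ x, f 0 x ^ 2) - (∑ x, f 0 x) ^ 2 / p) ^ 2 ≤ p * (D * M) ^ 2 := by
          have : 0 ≤ (∑ x, f 0 x) ^ 2 / p := by positivity
          refine mul_le_mul_of_nonneg_left (pow_le_pow_left₀ j2 ?_ 2) hp.le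
          linarith
        have a3 : q ^ 2 * (En (f 0) - (∑ x, f 0 x) ^ 4 / p) ≤ q ^ 2 * (M ^ 4 / p) := by
          rw [← hqq]
          refine (j3.trans a2).trans (le_of_eq ?_)
          rw [hqq, hD]; field_simp
        have a4 := le_of_mul_le_mul_left a3 (by positivity)
        have a5 : En (f 0) ≤ 2 * (M ^ 4 / p) := by linarith
        have a6 : M ^ 4 / p * q ≤ M ^ 2 * e := by
          rw [div_mul_eq_mul_div, div_le_iff₀ hp]
          have := mul_le_mul_of_nonneg_left hcase.le (sq_nonneg M)
          linarith
        have a7 : En (f 0) * q ≤ 2 * (M ^ 4 / p) * q := by gcongr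
        linarith [mul_nonneg (sq_nonneg M) i2]
      · have h := level_bound G hG r hr0 hr M hM hmax (D * 2 ^ (i - 1)) (by positivity) (by
          rw [hq, ← Dp]
          have : (1 : ℝ) ≤ 2 ^ (i - 1) := one_le_pow₀ (by norm_num)
          have h0 : 0 < D * p := by positivity
          rw [show D * 2 ^ (i - 1) * p = D * p * 2 ^ (i - 1) by ring]
          exact le_mul_of_one_le_right h0.le this)
        have ef : f i = fun x => if D * 2 ^ (i - 1) ≤ r x ∧ r x < 2 * (D * 2 ^ (i - 1)) then r x else 0 := by
          funext x
          simp only [hf, hi.ne', if_false]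
        rw [ef]
        rw [hq] at h
        refine h.trans ?_
        rw [← hT]
        calc 160000 * M ^ 2 * T ≤ 160000 * M ^ 2 * (2 * e) := by gcongr
          _ = _ := by ring
    have h1 : En r ≤ ((L + 1 : ℕ) : ℝ) ^ 4 * (320000 * M ^ 2 * e / q) := by
      refine (En_mono hr0 cover).trans ?_
      have := En_sum_le (range (L + 1)) f _ bnd
      rwa [card_range] at this
    have h2 : ((L + 1 : ℕ) : ℝ) ≤ 3 * l := by
      have : (Nat.log 2 p : ℝ) ≤ l := by
        rw [hl]; exact Real.natLog_le_logb p 2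
      rw [hL]; push_cast; linarith
    have h3 : En r * q ≤ 25920000 * l ^ 4 * M ^ 2 * e := by
      calc En r * q ≤ ((L + 1 : ℕ) : ℝ) ^ 4 * (320000 * M ^ 2 * e / q) * q := by gcongr
        _ = ((L + 1 : ℕ) : ℝ) ^ 4 * (320000 * M ^ 2 * e) := by field_simp
        _ ≤ (3 * l) ^ 4 * (320000 * M ^ 2 * e) := by gcongr
        _ = _ := by ring
    refine le_trans ?_ h3
    have : 0 ≤ M ^ 4 / p := by positivity
    nlinarith
end Rud
end

noncomputable section
namespace Rud
variable {p : ℕ} [Fact p.Prime]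

def rN (G : Finset (ZMod p)) (n : ℕ) (x : ZMod p) : ℕ := #{a ∈ Fintype.piFinset (fun _ : Fin n => G) | ∑ i, a i = x}
def rr (G : Finset (ZMod p)) (n : ℕ) (x : ZMod p) : ℝ := rN G n x

lemma rr_sq (G : Finset (ZMod p)) (n : ℕ) : (Tplus p n G : ℝ) = ∑ x, rr G n x ^ 2 := by
  have : Tplus p n G = ∑ x, rN G n x ^ 2 := by
    unfold Tplus
    rw [card_eq_sum_card_fiberwise (f := fun a => ∑ i, a.1 i) (t := univ) (fun _ _ => mem_univ _)]
    refine sum_congr rfl fun x _ => ?_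
    rw [sq, rN, ← card_product]
    congr 1
    ext a
    simp only [mem_filter, mem_product]
    constructor
    · rintro ⟨⟨⟨h1, h2⟩, h3⟩, h4⟩
      exact ⟨⟨h1, h4⟩, h2, h3 ▸ h4⟩
    · rintro ⟨⟨h1, h2⟩, h3, h4⟩
      exact ⟨⟨⟨h1, h3⟩, h2.trans h4.symm⟩, h2⟩
  rw [this]; push_cast; rfl

lemma rr_sum (G : Finset (ZMod p)) (n : ℕ) : ∑ x, rr G n x = (#G : ℝ) ^ n := by
  have : ∑ x, rN G n x = (#G) ^ n := by
    have h := card_eq_sum_card_fiberwise (s := Fintype.piFinset (fun _ : Fin n => G)) (f := fun a => ∑ i, a i) (t := univ) (fun _ _ => mem_univ _)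
    rw [Fintype.card_piFinset_const] at h
    exact h.symm
  unfold rr
  exact_mod_cast this

lemma rr_add (G : Finset (ZMod p)) (m n : ℕ) (t : ZMod p) : rr G (m + n) t = cv (rr G m) (rr G n) t := by
  have : rN G (m + n) t = ∑ x, rN G m x * rN G n (t - x) := by
    have e : ∑ x, rN G m x * rN G n (t - x) = #(univ.sigma fun x => {a ∈ Fintype.piFinset (fun _ : Fin m => G) | ∑ i, a i = x} ×ˢ {a ∈ Fintype.piFinset (fun _ : Fin n => G) | ∑ i, a i = t - x}) := by
      rw [card_sigma]
      simp only [card_product, rN]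
    rw [e, rN]
    symm
    refine card_bij (fun q _ => Fin.append q.2.1 q.2.2) ?_ ?_ ?_
    · rintro ⟨x, a, b⟩ h
      simp only [mem_sigma, mem_product, mem_filter, Fintype.mem_piFinset, mem_univ, true_and] at h ⊢
      obtain ⟨⟨h1, h2⟩, h3, h4⟩ := h
      refine ⟨fun i => ?_, ?_⟩
      · refine Fin.addCases (fun i => ?_) (fun i => ?_) i
        · rw [Fin.append_left]; exact h1 i
        · rw [Fin.append_right]; exact h3 i
      · rw [Fin.sum_univ_add]
        simp only [Fin.append_left, Fin.append_right]
        rw [h2, h4]; ring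
    · rintro ⟨x, a, b⟩ h ⟨x', a', b'⟩ h' hh
      simp only [mem_sigma, mem_product, mem_filter, Fintype.mem_piFinset, mem_univ, true_and] at h h'
      have e1 : a = a' := by
        funext i
        have := congrFun hh (Fin.castAdd n i)
        simpa using this
      have e2 : b = b' := by
        funext i
        have := congrFun hh (Fin.natAdd m i)
        simpa using this
      subst e1 e2
      have : x = x' := h.1.2.symm.trans h'.1.2
      subst this
      rfl
    · intro c hc
      simp only [mem_filter, Fintype.mem_piFinset] at hc
      refine ⟨⟨∑ i, c (Fin.castAdd n i), fun i => c (Fin.castAdd n i), fun i => c (Fin.natAdd m i)⟩, ?_, ?_⟩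
      · simp only [mem_sigma, mem_product, mem_filter, Fintype.mem_piFinset, mem_univ, true_and]
        refine ⟨⟨fun i => hc.1 _, trivial⟩, fun i => hc.1 _, ?_⟩
        rw [← hc.2, Fin.sum_univ_add]; ring
      · exact Fin.append_castAdd_natAdd
  unfold rr cv
  rw [this]; push_cast; rfl

lemma rr_inv (G : Finset (ZMod p)) (hG : Grp G) (n : ℕ) (g : ZMod p) (hg : g ∈ G) (x : ZMod p) : rr G n (g * x) = rr G n x := by
  have h : ∀ g ∈ G, ∀ x, rN G n x ≤ rN G n (g * x) := by
    intro g hg x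
    unfold rN
    refine card_le_card_of_injOn (fun a i => g * a i) ?_ ?_
    · intro a ha
      simp only [mem_coe, mem_filter, Fintype.mem_piFinset] at ha ⊢
      refine ⟨fun i => hG.2.2.1 _ hg _ (ha.1 i), ?_⟩
      rw [← mul_sum, ha.2]
    · intro a _ b _ h
      funext i
      exact mul_left_cancel₀ (hG.2.1 g hg) (congrFun h i)
  unfold rr
  congr 1
  refine le_antisymm ?_ (h g hg x)
  have := h _ (hG.2.2.2 g hg) (g * x)
  rwa [inv_mul_cancel_left₀ (hG.2.1 g hg)] at this

lemma rr_nonneg (G : Finset (ZMod p)) (n : ℕ) (x : ZMod p) : 0 ≤ rr G n x := Nat.cast_nonneg _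

lemma rr_max (G : Finset (ZMod p)) (j : ℕ) (x : ZMod p) : rr G (2 ^ j) x * #G ≤ (#G : ℝ) ^ (2 ^ j) := by
  induction j generalizing x with
  | zero =>
    have : rN G 1 x ≤ 1 := by
      unfold rN
      rw [card_le_one]
      intro a ha b hb
      simp only [mem_filter, univ_unique, sum_singleton] at ha hb
      funext i
      rw [Subsingleton.elim i default, ha.2, hb.2]
    have h2 : rr G 1 x ≤ 1 := by unfold rr; exact_mod_cast this
    simp only [pow_zero, pow_one]
    exact mul_le_of_le_one_left (Nat.cast_nonneg _) h2
  | succ j ih =>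
    rw [pow_succ, mul_two, rr_add, pow_add]
    unfold cv
    rw [sum_mul]
    calc ∑ y, rr G (2 ^ j) y * rr G (2 ^ j) (x - y) * #G
        ≤ ∑ y, rr G (2 ^ j) y * (#G : ℝ) ^ (2 ^ j) := by
          refine sum_le_sum fun y _ => ?_
          rw [mul_assoc]
          exact mul_le_mul_of_nonneg_left (ih _) (rr_nonneg _ _ _)
      _ = _ := by rw [← sum_mul, rr_sum]

lemma En_rr (G : Finset (ZMod p)) (j : ℕ) : En (rr G (2 ^ j)) = Tplus p (2 ^ (j + 1)) G := by
  rw [rr_sq, pow_succ, mul_two]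
  unfold En
  exact sum_congr rfl fun t _ => by rw [rr_add]

theorem mainR (hp2 : 2 < p) (G : Finset (ZMod p)) (hG : Grp G) (k : ℕ) :
    0 ≤ (Tplus p (2 ^ (k + 1)) G : ℝ) - (#G : ℝ) ^ (2 ^ (k + 2)) / p ∧
    (Tplus p (2 ^ (k + 1)) G : ℝ) - (#G : ℝ) ^ (2 ^ (k + 2)) / p ≤
      (25920000 * (Real.logb 2 p) ^ 4) ^ k * (#G : ℝ) ^ ((2 : ℝ) ^ (k + 2) - ((k : ℝ) + 8) / 2) * Tplus p 2 G := by
  have g1 : (1 : ℝ) ≤ #G := by exact_mod_cast card_pos.2 ⟨1, hG.1⟩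
  have g0 : (0 : ℝ) < #G := by linarith
  have hp : (0 : ℝ) < p := by exact_mod_cast (Fact.out : p.Prime).pos
  have nn : ∀ j : ℕ, 0 ≤ (Tplus p (2 ^ j) G : ℝ) - (#G : ℝ) ^ (2 ^ (j + 1)) / p := by
    intro j
    have := (En_inv G hG (rr G (2 ^ j)) (fun g hg x => rr_inv G hG _ g hg x)).2.1
    rwa [rr_sum, ← rr_sq, ← pow_mul, ← pow_succ] at this
  refine ⟨nn (k + 1), ?_⟩
  induction k with
  | zero =>
    have : (2 : ℝ) ^ (0 + 2) - (((0 : ℕ) : ℝ) + 8) / 2 = 0 := by norm_num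
    rw [this, Real.rpow_zero, pow_zero, one_mul, one_mul]
    simp only [zero_add, pow_one]
    have : 0 ≤ (#G : ℝ) ^ (2 ^ 2) / (p : ℝ) := by
      exact div_nonneg (pow_nonneg g0.le _) hp.le
    linarith
  | succ k ih =>
    have h := step hp2 G hG (rr G (2 ^ (k + 1))) (rr_nonneg _ _) (fun g hg x => rr_inv G hG _ g hg x)
      ((#G : ℝ) ^ (2 ^ (k + 1))) (pow_pos g0 _) (rr_sum _ _) (rr_max _ _)
    rw [En_rr, ← rr_sq, ← pow_mul, ← pow_mul, ← pow_succ] at h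
    rw [show 2 ^ (k + 1) * 4 = 2 ^ (k + 1 + 2) by ring] at h
    obtain ⟨l4, hl⟩ : ∃ a, 25920000 * (Real.logb 2 p) ^ 4 = a := ⟨_, rfl⟩
    have l0 : 0 ≤ l4 := by rw [← hl]; positivity
    rw [hl] at h ih ⊢
    have h2 := h.trans (mul_le_mul_of_nonneg_left ih (mul_nonneg l0 (pow_nonneg g0.le _)))
    have sq0 : 0 < Real.sqrt #G := Real.sqrt_pos.2 g0
    refine le_of_mul_le_mul_right (h2.trans (le_of_eq ?_)) sq0
    have e1 : (#G : ℝ) ^ (2 ^ (k + 1 + 1)) = (#G : ℝ) ^ ((2 : ℝ) ^ (k + 2)) := by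
      rw [← Real.rpow_natCast]; push_cast; rfl
    have e2 : (#G : ℝ) ^ ((2 : ℝ) ^ (k + 2)) * (#G : ℝ) ^ ((2 : ℝ) ^ (k + 2) - ((k : ℝ) + 8) / 2)
        = (#G : ℝ) ^ ((2 : ℝ) ^ (k + 1 + 2) - (((k + 1 : ℕ) : ℝ) + 8) / 2) * Real.sqrt #G := by
      rw [Real.sqrt_eq_rpow, ← Real.rpow_add g0, ← Real.rpow_add g0]
      congr 1
      push_cast
      ring
    rw [e1, pow_succ l4 k]
    linear_combination (l4 * l4 ^ k * Tplus p 2 G) * e2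

end Rud
end

theorem stmt0 :
    ∃ C : ℝ, 0 < C ∧
      ∀ (p : ℕ), p.Prime → Odd p →
        ∀ (G : Finset (ZMod p)) (H : Subgroup (ZMod p)ˣ),
          (G : Set (ZMod p)) = (fun u : (ZMod p)ˣ => (u : ZMod p)) '' (H : Set (ZMod p)ˣ) →
          ∀ k : ℕ, 1 ≤ k →
            0 ≤ (Tplus p (2 ^ k) G : ℝ) - (G.card : ℝ) ^ (2 ^ (k + 1)) / p ∧
            (Tplus p (2 ^ k) G : ℝ) - (G.card : ℝ) ^ (2 ^ (k + 1)) / p ≤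
              (2 : ℝ) ^ (3 * k ^ 2) * (C * (Real.logb 2 p) ^ 4) ^ (k - 1) *
                (G.card : ℝ) ^ ((2 : ℝ) ^ (k + 1) - ((k : ℝ) + 7) / 2) *
                  (Tplus p 2 G : ℝ) := by
  refine ⟨25920000, by norm_num, ?_⟩
  intro p hp hodd G H hGH k hk
  haveI : Fact p.Prime := ⟨hp⟩
  have hp2 : 2 < p := by
    have := hp.two_le
    rcases hodd with ⟨m, hm⟩
    omega
  have mem : ∀ x, x ∈ G ↔ ∃ u ∈ H, (u : ZMod p) = x := by
    intro x
    rw [← Finset.mem_coe, hGH]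
    rfl
  have hG : Rud.Grp G := by
    refine ⟨(mem 1).2 ⟨1, H.one_mem, rfl⟩, ?_, ?_, ?_⟩
    · intro a ha
      obtain ⟨u, _, rfl⟩ := (mem a).1 ha
      exact u.ne_zero
    · intro a ha b hb
      obtain ⟨u, hu, rfl⟩ := (mem a).1 ha
      obtain ⟨v, hv, rfl⟩ := (mem b).1 hb
      exact (mem _).2 ⟨u * v, H.mul_mem hu hv, by push_cast; rfl⟩
    · intro a ha
      obtain ⟨u, hu, rfl⟩ := (mem a).1 ha
      exact (mem _).2 ⟨u⁻¹, H.inv_mem hu, ZMod.inv_coe_unit u ▸ rfl⟩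
  obtain ⟨k, rfl⟩ : ∃ m, k = m + 1 := ⟨k - 1, by omega⟩
  obtain ⟨h1, h2⟩ := Rud.mainR hp2 G hG k
  refine ⟨h1, h2.trans ?_⟩
  have e : (2 : ℝ) ^ (k + 1 + 1) - (((k + 1 : ℕ) : ℝ) + 7) / 2 = (2 : ℝ) ^ (k + 2) - ((k : ℝ) + 8) / 2 := by
    push_cast; ring
  rw [e, Nat.add_sub_cancel, mul_assoc, mul_assoc ((2 : ℝ) ^ _), mul_assoc ((2 : ℝ) ^ _)]
  have pos : 0 ≤ (25920000 * (Real.logb 2 p) ^ 4) ^ k * ((#G : ℝ) ^ ((2 : ℝ) ^ (k + 2) - ((k : ℝ) + 8) / 2) * (Tplus p 2 G : ℝ)) := by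
    refine mul_nonneg (by positivity) (mul_nonneg (Real.rpow_nonneg (Nat.cast_nonneg _) _) (Nat.cast_nonneg _))
  rw [mul_assoc]
  exact le_mul_of_one_le_left pos (one_le_pow₀ (by norm_num))
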